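/- arXiv:2508.19214 — 3 statements merged into one kernel-verified Lean document; each statement's English description precedes it below -/
import Mathlib

section
/- Let F = ℚ(√d) be an imaginary quadratic field with d = p₁···p_r < 0 a squarefree product of (signed) primes with d ≡ 1 (mod 4), and let 𝔭_i be the prime of O_F above p_i. Then the 2-torsion subgroup cl(F)[2] of the class group is generated by the classes [𝔭₁],...,[𝔭_r], and these satisfy the relation [𝔭₁] + ... + [𝔭_r] = 0. -/
open NumberField
open scoped nonZeroDivisors

open scoped Pointwise

/-! Let `σ` be the nontrivial automorphism of `F`. For `x, y` in an ideal `I` the conjugates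
`x · σy` and `y · σx` have sum divisible by `N I` and product divisible by `(N I)²`, so each is
divisible by `N I`; this gives `I · σI = (N I)`. If `I² = (γ)`, then `γ · σγ = (N I)²`, because
norms from an imaginary quadratic field are nonnegative; hence `N I / γ` has norm one, and
Hilbert 90 moves `I` inside its class to a `σ`-fixed ideal. A `σ`-fixed ideal is a product of
`σ`-fixed primes and of principal ideals `Q · σQ`. A non-principal `σ`-fixed prime `Q` has a prime
residue field, so `x - σx ∈ Q` for every integer `x`, which forces `√d ∈ Q`: take
`x = (1 + √d) / 2` if `d ≡ 1 (mod 4)` and `x = √d` if `d` is even. The primes containing `√d` are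
the `𝔭ᵢ = (pᵢ, √d)`, whose squares are the `(pᵢ)`. -/

section Involution

variable {G : Type*} [Monoid G] {g : G}

theorem smul_smul_of_mul_self_eq_one {X : Type*} [MulAction G X] (hg : g * g = 1) (x : X) :
    g • g • x = x := by
  rw [smul_smul, hg, one_smul]

theorem mul_smul_dvd_of_prime_dvd {M : Type*} [CommMonoidWithZero M] [IsCancelMulZero M]
    [Subsingleton Mˣ] [MulDistribMulAction G M] (hg : g * g = 1) {p a : M} (hp : Prime p)
    (hgp : g • p ≠ p) (hga : g • a = a) (hpa : p ∣ a) : p * g • p ∣ a := by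
  obtain ⟨b, hb⟩ : g • p ∣ a := hga ▸ map_dvd (MulDistribMulAction.toMonoidHom M g) hpa
  rcases hp.dvd_or_dvd (hb ▸ hpa) with hdvd | ⟨c, rfl⟩
  · have hdvd' : g • p ∣ p := by
      simpa only [MulDistribMulAction.toMonoidHom_apply, smul_smul_of_mul_self_eq_one hg]
        using map_dvd (MulDistribMulAction.toMonoidHom M g) hdvd
    exact absurd (dvd_antisymm hdvd' hdvd) hgp
  · exact ⟨c, by rw [hb, mul_left_comm, mul_assoc]⟩

theorem mem_closure_prime_of_smul_eq_self {M : Type*} [CommMonoidWithZero M]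
    [UniqueFactorizationMonoid M] [Subsingleton Mˣ] [MulDistribMulAction G M] (hg : g * g = 1)
    {a : M} (ha : a ≠ 0) (hga : g • a = a) :
    a ∈ Submonoid.closure
      ({p : M | Prime p ∧ g • p = p} ∪ (fun p ↦ p * g • p) '' {p : M | Prime p}) := by
  induction a using IsWellFounded.wf (r := DvdNotUnit (α := M)) |>.induction with | _ a ih
  by_cases hau : IsUnit a
  · rw [isUnit_iff_eq_one.mp hau]
    exact one_mem _
  obtain ⟨p, hp, hpa⟩ : ∃ p, Prime p ∧ p ∣ a :=
    (WfDvdMonoid.exists_irreducible_factor hau ha).imp fun p h ↦ ⟨h.1.prime, h.2⟩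
  obtain ⟨c, hc, hcu, hgc, b, rfl⟩ : ∃ c ∈ {p : M | Prime p ∧ g • p = p} ∪
      (fun p ↦ p * g • p) '' {p : M | Prime p}, ¬ IsUnit c ∧ g • c = c ∧ c ∣ a := by
    by_cases hgp : g • p = p
    · exact ⟨p, .inl ⟨hp, hgp⟩, hp.not_isUnit, hgp, hpa⟩
    · refine ⟨p * g • p, .inr ⟨p, hp, rfl⟩, fun h ↦ hp.not_isUnit (isUnit_of_mul_isUnit_left h), ?_,
        mul_smul_dvd_of_prime_dvd hg hp hgp hga hpa⟩
      rw [smul_mul', smul_smul_of_mul_self_eq_one hg, mul_comm]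
  have hb : b ≠ 0 := right_ne_zero_of_mul ha
  have hgb : g • b = b :=
    mul_left_cancel₀ (left_ne_zero_of_mul ha) (by rwa [smul_mul', hgc] at hga)
  exact mul_mem (Submonoid.subset_closure hc) (ih b ⟨hb, c, hcu, mul_comm c b⟩ hb hgb)

theorem dvd_of_dvd_add_of_sq_dvd_mul {R : Type*} [CommRing R] [IsDomain R] [IsIntegrallyClosed R]
    {n x y : R} (hadd : n ∣ x + y) (hmul : n ^ 2 ∣ x * y) : n ∣ x := by
  obtain ⟨t, ht⟩ := hadd
  obtain ⟨m, hm⟩ := hmul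
  rcases eq_or_ne n 0 with rfl | hn
  · have hx : x ^ 2 = 0 := by linear_combination x * ht - hm
    rw [pow_eq_zero_iff two_ne_zero |>.mp hx]
  have hnK : algebraMap R (FractionRing R) n ≠ 0 := by simpa using hn
  -- The quotient `x / n` is a root of `X² - tX + m`.
  have hint : IsIntegral R (algebraMap R (FractionRing R) x / algebraMap R (FractionRing R) n) := by
    refine ⟨.X ^ 2 - (.C t * .X - .C m), Polynomial.monic_X_pow_sub (by compute_degree!), ?_⟩
    have h : algebraMap R (FractionRing R) (x ^ 2 - n * t * x + n ^ 2 * m) = 0 := by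
      rw [← map_zero (algebraMap R (FractionRing R))]
      congr 1
      linear_combination x * ht - hm
    simp only [map_add, map_sub, map_mul, map_pow] at h
    simp only [Polynomial.eval₂_sub, Polynomial.eval₂_pow, Polynomial.eval₂_X,
      Polynomial.eval₂_mul, Polynomial.eval₂_C]
    field_simp
    linear_combination h
  obtain ⟨z, hz⟩ := IsIntegrallyClosed.isIntegral_iff.mp hint
  refine ⟨z, IsFractionRing.injective R (FractionRing R) ?_⟩
  rw [map_mul, hz, mul_div_cancel₀ _ hnK]

theorem dvd_mul_smul_of_dvd_mul_smul_self {R : Type*} [CommRing R] [IsDomain R]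
    [IsIntegrallyClosed R] [MulSemiringAction G R] {I : Ideal R} {n : R}
    (h : ∀ x ∈ I, n ∣ x * g • x) {x y : R} (hx : x ∈ I) (hy : y ∈ I) : n ∣ x * g • y := by
  apply dvd_of_dvd_add_of_sq_dvd_mul (y := y * g • x)
  · have hpolar : x * g • y + y * g • x =
        (x + y) * g • (x + y) - x * g • x - y * g • y := by
      rw [smul_add]; ring
    rw [hpolar]
    exact dvd_sub (dvd_sub (h _ (I.add_mem hx hy)) (h x hx)) (h y hy)
  · have hprod : x * g • y * (y * g • x) = (x * g • x) * (y * g • y) := by ring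
    rw [hprod, sq]
    exact mul_dvd_mul (h x hx) (h y hy)

theorem two_dvd_one_add_of_sq_eq {R : Type*} [CommRing R] [IsDomain R] [IsIntegrallyClosed R]
    {d : ℤ} {a : R} (hd : d % 4 = 1) (ha : a ^ 2 = d) : 2 ∣ 1 + a := by
  refine dvd_of_dvd_add_of_sq_dvd_mul (y := 1 - a) ⟨1, by ring⟩ ⟨(-(d / 4) : ℤ), ?_⟩
  have hd' : (d : R) = 4 * (d / 4 : ℤ) + 1 := by
    exact_mod_cast congrArg (Int.cast (R := R)) (by omega : d = 4 * (d / 4) + 1)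
  push_cast
  linear_combination -ha - hd'

variable {R : Type*} [CommRing R] [IsDedekindDomain R] [MulSemiringAction G R]

theorem mk0_mem_of_smul_eq_self (hg : g * g = 1) {H : Subgroup (ClassGroup R)}
    (hnorm : ∀ Q : Ideal R, Prime Q → (Q * g • Q).IsPrincipal)
    (hfixed : ∀ Q : (Ideal R)⁰, (Q : Ideal R).IsPrime → g • (Q : Ideal R) = Q →
      ClassGroup.mk0 Q ∈ H)
    {J : (Ideal R)⁰} (hJ : g • (J : Ideal R) = J) : ClassGroup.mk0 J ∈ H := by
  have hle : Submonoid.closure ({Q : Ideal R | Prime Q ∧ g • Q = Q} ∪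
      (fun Q ↦ Q * g • Q) '' {Q : Ideal R | Prime Q}) ≤
      (H.toSubmonoid.comap ClassGroup.mk0).map (Ideal R)⁰.subtype := by
    rw [Submonoid.closure_le]
    rintro _ (⟨hQ, hgQ⟩ | ⟨Q, hQ, rfl⟩)
    · exact ⟨⟨_, mem_nonZeroDivisors_of_ne_zero hQ.ne_zero⟩,
        hfixed _ (Ideal.isPrime_of_prime hQ) hgQ, rfl⟩
    · have hgQ : g • Q ≠ 0 := fun h ↦ hQ.ne_zero (by
        rw [← smul_smul_of_mul_self_eq_one hg Q, h, smul_zero])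
      have hQ' := mem_nonZeroDivisors_of_ne_zero (mul_ne_zero hQ.ne_zero hgQ)
      refine ⟨⟨_, hQ'⟩, ?_, rfl⟩
      change ClassGroup.mk0 _ ∈ H
      rw [(ClassGroup.mk0_eq_one_iff hQ').mpr (hnorm Q hQ)]
      exact H.one_mem
  obtain ⟨J', hJ', h⟩ := hle (mem_closure_prime_of_smul_eq_self hg (nonZeroDivisors.ne_zero J.2) hJ)
  rwa [Subtype.ext h] at hJ'

theorem exists_smul_eq_self_and_mk0_eq (hg : g * g = 1) {I : (Ideal R)⁰} {γ n : R}
    (hγ : (I : Ideal R) ^ 2 = Ideal.span {γ})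
    (hn : (I : Ideal R) * g • (I : Ideal R) = Ideal.span {n}) (hgn : g • n = n)
    (hγn : γ * g • γ = n ^ 2) :
    ∃ J : (Ideal R)⁰, g • (J : Ideal R) = J ∧ ClassGroup.mk0 J = ClassGroup.mk0 I := by
  -- The Hilbert 90 element `β = n + gγ` satisfies `n · gβ = γ · β`, so `g` fixes `β I`.
  have hI : (I : Ideal R) ≠ 0 := nonZeroDivisors.ne_zero I.2
  rcases eq_or_ne (n + g • γ) 0 with h0 | h0
  · refine ⟨I, mul_left_cancel₀ hI ?_, rfl⟩
    have hγ' : γ = -n := by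
      have := congrArg (g • ·) h0
      simp only [smul_add, smul_smul, hg, one_smul, smul_zero, hgn] at this
      linear_combination this
    rw [hn, ← sq, hγ, hγ', Ideal.span_singleton_neg]
  · have hβ : Ideal.span {n + g • γ} ∈ (Ideal R)⁰ :=
      mem_nonZeroDivisors_of_ne_zero (by simpa using h0)
    refine ⟨I * ⟨_, hβ⟩, mul_left_cancel₀ hI ?_, ClassGroup.mk0_eq_mk0_iff.mpr
      ⟨1, n + g • γ, one_ne_zero, h0, ?_⟩⟩
    · simp only [Submonoid.coe_mul, smul_mul', Ideal.smul_closure, Set.smul_set_singleton,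
        smul_add, smul_smul, hg, one_smul, hgn]
      rw [← mul_assoc, ← mul_assoc, hn, ← sq, hγ, Ideal.span_singleton_mul_span_singleton,
        Ideal.span_singleton_mul_span_singleton]
      congr 2
      linear_combination -hγn
    · simp [mul_comm]

variable [Module.Free ℤ R]

theorem exists_intCast_sub_mem_of_prime_absNorm {I : Ideal R} (hI : (Ideal.absNorm I).Prime)
    (x : R) : ∃ n : ℤ, x - n ∈ I := by
  have : Finite (R ⧸ I) := (Ideal.absNorm_ne_zero_iff I).mp hI.ne_zero
  have := Fintype.ofFinite (R ⧸ I)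
  have e := ZMod.ringEquivOfPrime (R ⧸ I) hI (by rw [← Nat.card_eq_fintype_card]; rfl)
  obtain ⟨n, hn⟩ := ZMod.intCast_surjective (e.symm (Ideal.Quotient.mk I x))
  refine ⟨n, ?_⟩
  rw [← Ideal.Quotient.eq_zero_iff_mem, map_sub, map_intCast,
    ← e.apply_symm_apply (Ideal.Quotient.mk I x), ← hn, map_intCast, sub_self]

theorem sub_smul_mem_of_prime_absNorm {I : Ideal R} (hI : (Ideal.absNorm I).Prime) (hgI : g • I = I)
    (x : R) : x - g • x ∈ I := by
  obtain ⟨n, hn⟩ := exists_intCast_sub_mem_of_prime_absNorm hI x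
  have hgn : g • (x - n) ∈ I := hgI ▸ Ideal.smul_mem_pointwise_smul g _ I hn
  have : x - g • x = (x - n) - g • (x - n) := by
    have hgint : g • (n : R) = n := map_intCast (MulSemiringAction.toRingHom G R g) n
    rw [smul_sub, hgint]; ring
  exact this ▸ I.sub_mem hn hgn

theorem sqrt_mem_of_smul_eq_self {d : ℤ} {a : R} (hga : g • a = -a) (ha : a ^ 2 = d)
    (hd : d % 4 ≠ 3) {Q : Ideal R} (hQ : (Ideal.absNorm Q).Prime) (hgQ : g • Q = Q) : a ∈ Q := by
  have hprime : Q.IsPrime := Ideal.isPrime_of_irreducible_absNorm hQ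
  by_cases hd1 : d % 4 = 1
  · obtain ⟨ω, hω⟩ := two_dvd_one_add_of_sq_eq hd1 ha
    have : CharZero R :=
      ((algebraMap ℤ R).charZero_iff (FaithfulSMul.algebraMap_injective ℤ R)).mp inferInstance
    have hdiff : ω - g • ω = a := by
      have hgω : 1 - a = 2 * g • ω := by
        have hg2 : g • (2 : R) = 2 := map_ofNat (MulSemiringAction.toRingHom G R g) 2
        rw [← hg2, ← smul_mul', ← hω, smul_add, smul_one, hga, sub_eq_add_neg]
      apply mul_left_cancel₀ (two_ne_zero (α := R))
      linear_combination hgω - hω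
    exact hdiff ▸ sub_smul_mem_of_prime_absNorm hQ hgQ ω
  · have h2a : 2 * a ∈ Q := by
      have h := sub_smul_mem_of_prime_absNorm hQ hgQ a
      rwa [hga, sub_neg_eq_add, ← two_mul] at h
    obtain ⟨c, rfl⟩ : 2 ∣ d := by omega
    refine (hprime.mem_or_mem h2a).elim (fun h2 ↦ hprime.mem_of_pow_mem 2 ?_) id
    rw [ha, Int.cast_mul, Int.cast_ofNat]
    exact Q.mul_mem_right _ h2

end Involution

theorem span_pair_sq_eq_span_singleton {R : Type*} [CommRing R] {p e a : R} (hpe : IsCoprime p e)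
    (ha : a ^ 2 = p * e) : Ideal.span {p, a} ^ 2 = Ideal.span {p} := by
  apply le_antisymm
  · rw [sq, Ideal.span_pair_mul_span_pair, Ideal.span_le]
    rintro z (rfl | rfl | rfl | rfl) <;> rw [SetLike.mem_coe, Ideal.mem_span_singleton]
    · exact dvd_mul_right _ _
    · exact dvd_mul_right _ _
    · exact dvd_mul_left _ _
    · exact ⟨e, by rw [← sq, ha]⟩
  · obtain ⟨u, v, huv⟩ := hpe
    have hp : u * p ^ 2 + v * a ^ 2 = p := by
      rw [ha]
      linear_combination p * huv
    have hmem : u * p ^ 2 + v * a ^ 2 ∈ Ideal.span {p, a} ^ 2 := add_mem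
      (Ideal.mul_mem_left _ u (Ideal.pow_mem_pow (Ideal.subset_span (by simp)) 2))
      (Ideal.mul_mem_left _ v (Ideal.pow_mem_pow (Ideal.subset_span (by simp)) 2))
    rwa [hp, ← Ideal.span_singleton_le_iff_mem] at hmem

theorem span_intCast_pair_sq {R : Type*} [CommRing R] {d p : ℤ} {a : R} (hp : p ∣ d)
    (hd : Squarefree d) (ha : a ^ 2 = d) : Ideal.span {(p : R), a} ^ 2 = Ideal.span {(p : R)} := by
  obtain ⟨e, rfl⟩ := hp
  exact span_pair_sq_eq_span_singleton (squarefree_mul_iff.mp hd).1.isCoprime.intCast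
    (by rw [ha, Int.cast_mul])

theorem mk0_sq_eq_one_iff {R : Type*} [CommRing R] [IsDedekindDomain R] (I : (Ideal R)⁰) :
    ClassGroup.mk0 I ^ 2 = 1 ↔ ((I : Ideal R) ^ 2).IsPrincipal := by
  rw [← map_pow, ClassGroup.mk0_eq_one_iff (I ^ 2).2, SubmonoidClass.coe_pow]

section Quadratic

section Field

variable {k L : Type*} [Field k] [Field L] [Algebra k L] [Algebra.IsQuadraticExtension k L]
  [IsGalois k L]

variable (k L) in
theorem exists_gal_ne_one : ∃ σ : Gal(L/k), σ ≠ 1 := by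
  have : Nontrivial Gal(L/k) := by
    rw [← Finite.one_lt_card_iff_nontrivial, IsGalois.card_aut_eq_finrank,
      Algebra.IsQuadraticExtension.finrank_eq_two]
    exact one_lt_two
  exact exists_ne 1

theorem gal_eq_one_or_eq_of_ne_one {σ : Gal(L/k)} (hσ : σ ≠ 1) (τ : Gal(L/k)) : τ = 1 ∨ τ = σ := by
  have hcard : Nat.card Gal(L/k) = 2 := by
    rw [IsGalois.card_aut_eq_finrank, Algebra.IsQuadraticExtension.finrank_eq_two]
  exact or_iff_not_imp_left.mpr fun hτ ↦ ((Nat.card_eq_two_iff' 1).mp hcard).unique hτ hσ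

theorem gal_mul_self_eq_one (σ : Gal(L/k)) : σ * σ = 1 := by
  rw [← sq, ← Algebra.IsQuadraticExtension.finrank_eq_two k L, ← IsGalois.card_aut_eq_finrank,
    pow_card_eq_one']

theorem algebraMap_norm_eq_mul {σ : Gal(L/k)} (hσ : σ ≠ 1) (x : L) :
    algebraMap k L (Algebra.norm k x) = x * σ x := by
  rw [Algebra.norm_eq_prod_automorphisms, Fintype.prod_eq_mul 1 σ hσ.symm, AlgEquiv.one_apply]
  rintro τ ⟨hτ1, hτσ⟩
  exact ((gal_eq_one_or_eq_of_ne_one hσ τ).elim hτ1 hτσ).elim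

theorem mem_range_algebraMap_of_gal_apply_eq {σ : Gal(L/k)} (hσ : σ ≠ 1) {x : L} (hx : σ x = x) :
    x ∈ Set.range (algebraMap k L) := by
  refine IntermediateField.mem_bot.mp ((IsGalois.mem_bot_iff_fixed x).mpr fun τ ↦ ?_)
  obtain rfl | rfl := gal_eq_one_or_eq_of_ne_one hσ τ
  exacts [rfl, hx]

theorem gal_apply_eq_neg_of_sq_eq {σ : Gal(L/k)} (hσ : σ ≠ 1) {c : k} (hc : ¬ IsSquare c) {α : L}
    (hα : α ^ 2 = algebraMap k L c) : σ α = -α := by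
  have hsq : σ α ^ 2 = α ^ 2 := by rw [← map_pow, hα, AlgEquiv.commutes]
  refine (sq_eq_sq_iff_eq_or_eq_neg.mp hsq).resolve_left fun hfix ↦ hc ?_
  obtain ⟨q, rfl⟩ := mem_range_algebraMap_of_gal_apply_eq hσ hfix
  refine ⟨q, (algebraMap k L).injective ?_⟩
  rw [← hα, map_mul, sq]

theorem norm_nonneg_of_sq_eq_of_neg [LinearOrder k] [IsStrictOrderedRing k] {c : k} (hc : c < 0)
    {α : L} (hα : α ^ 2 = algebraMap k L c) (x : L) : 0 ≤ Algebra.norm k x := by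
  obtain ⟨σ, hσ⟩ := exists_gal_ne_one k L
  have hσσ (y : L) : σ (σ y) = y := DFunLike.congr_fun (gal_mul_self_eq_one σ) y
  have hσα : σ α = -α := gal_apply_eq_neg_of_sq_eq hσ (fun h ↦ hc.not_ge h.nonneg) hα
  have hα0 : α ≠ 0 := by
    rintro rfl
    exact hc.ne ((algebraMap k L).injective (by rw [← hα, map_zero, zero_pow two_ne_zero]))
  obtain ⟨t, ht⟩ : x + σ x ∈ Set.range (algebraMap k L) :=
    mem_range_algebraMap_of_gal_apply_eq hσ (by rw [map_add, hσσ, add_comm])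
  obtain ⟨v, hv⟩ : (x - σ x) / α ∈ Set.range (algebraMap k L) :=
    mem_range_algebraMap_of_gal_apply_eq hσ (by
      rw [map_div₀, map_sub, hσσ, hσα, div_neg, ← neg_div, neg_sub])
  have hnorm : 4 * Algebra.norm k x = t ^ 2 - c * v ^ 2 := by
    apply (algebraMap k L).injective
    simp only [map_mul, map_sub, map_pow, map_ofNat, algebraMap_norm_eq_mul hσ, ht, hv, ← hα]
    field_simp
    ring
  nlinarith [sq_nonneg t, mul_nonneg (neg_nonneg.mpr hc.le) (sq_nonneg v)]

end Field

variable {K : Type*} [Field K] [NumberField K] [Algebra.IsQuadraticExtension ℚ K] {σ : Gal(K/ℚ)}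

theorem intCast_norm_eq_mul_smul (hσ : σ ≠ 1) (x : 𝓞 K) :
    ((Algebra.norm ℤ x : ℤ) : 𝓞 K) = x * σ • x := by
  have h := algebraMap_norm_eq_mul hσ (x : K)
  rw [← Algebra.coe_norm_int, eq_ratCast, Rat.cast_intCast] at h
  exact RingOfIntegers.ext ((map_intCast (algebraMap (𝓞 K) K) _).trans h)

theorem mul_smul_eq_span_absNorm (hσ : σ ≠ 1) (I : Ideal (𝓞 K)) :
    I * σ • I = Ideal.span {(Ideal.absNorm I : 𝓞 K)} := by
  apply le_antisymm
  · have hself (x : 𝓞 K) (hx : x ∈ I) : (Ideal.absNorm I : 𝓞 K) ∣ x * σ • x := by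
      rw [← intCast_norm_eq_mul_smul hσ, ← Int.cast_natCast]
      exact Int.cast_dvd_cast _ _ (Ideal.absNorm_dvd_norm_of_mem hx)
    rw [Ideal.mul_le]
    intro x hx z hz
    obtain ⟨y, hy, rfl⟩ := (Ideal.mem_map_iff_of_surjective _
      (MulSemiringAction.toRingEquiv _ _ σ).surjective).mp hz
    exact Ideal.mem_span_singleton.mpr (dvd_mul_smul_of_dvd_mul_smul_self hself hx hy)
  · have hspan := Ideal.map_relNorm ℤ I (Int.castRingHom (𝓞 K))
    rw [Ideal.relNorm_int, Ideal.map_span, Set.image_singleton, map_natCast] at hspan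
    rw [hspan, Ideal.span_le]
    rintro _ ⟨x, hx, rfl⟩
    rw [Function.comp_apply, Algebra.intNorm_eq_norm, eq_intCast, intCast_norm_eq_mul_smul hσ]
    exact Ideal.mul_mem_mul hx (Ideal.smul_mem_pointwise_smul σ x I hx)

theorem isPrincipal_or_prime_absNorm_of_smul_eq_self (hσ : σ ≠ 1) {Q : Ideal (𝓞 K)} [Q.IsMaximal]
    (hQ : σ • Q = Q) : Q.IsPrincipal ∨ (Ideal.absNorm Q).Prime := by
  obtain ⟨q, n, hn, hqQ, hq, hnorm⟩ := Ideal.exists_prime_and_absNorm_eq_pow Q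
  have hdvd : q ^ n ∣ q ^ 2 := by
    rw [← hnorm, ← Algebra.IsQuadraticExtension.finrank_eq_two ℚ K, ← RingOfIntegers.rank,
      ← Ideal.absNorm_span_natCast]
    exact Ideal.absNorm_dvd_absNorm_of_le ((Ideal.span_singleton_le_iff_mem Q).mpr hqQ)
  have hn2 : n ≤ 2 := (Nat.pow_dvd_pow_iff_le_right hq.one_lt).mp hdvd
  obtain rfl | rfl : n = 1 ∨ n = 2 := by omega
  · exact .inr (by rwa [hnorm, pow_one])
  · left
    have hsq : Q ^ 2 = Ideal.span {(q : 𝓞 K)} ^ 2 := by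
      rw [sq, ← congrArg (Q * ·) hQ, mul_smul_eq_span_absNorm hσ, hnorm, Nat.cast_pow,
        Ideal.span_singleton_pow]
    exact ⟨q, (pow_left_inj two_ne_zero).mp hsq⟩

variable {d : ℤ} {a : 𝓞 K}

theorem eq_span_of_intCast_mem {p : ℤ} (hp : Prime p) (hpd : p ∣ d) (hd : Squarefree d)
    (ha : a ^ 2 = d) {Q : Ideal (𝓞 K)} [hQ : Q.IsPrime] (hpQ : (p : 𝓞 K) ∈ Q) :
    Q = Ideal.span {(p : 𝓞 K), a} := by
  have hnorm : Ideal.absNorm (Ideal.span {(p : 𝓞 K), a}) = p.natAbs := by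
    rw [← Nat.pow_left_inj two_ne_zero, ← map_pow, span_intCast_pair_sq hpd hd ha,
      Ideal.absNorm_span_singleton, ← Int.natAbs_pow, ← eq_intCast (algebraMap ℤ (𝓞 K)),
      Algebra.norm_algebraMap, RingOfIntegers.rank, Algebra.IsQuadraticExtension.finrank_eq_two]
  have hprime : (Ideal.span {(p : 𝓞 K), a}).IsPrime :=
    Ideal.isPrime_of_irreducible_absNorm (hnorm ▸ Int.prime_iff_natAbs_prime.mp hp)
  have hne : Ideal.span {(p : 𝓞 K), a} ≠ ⊥ := by
    rw [Ne, ← Ideal.absNorm_eq_zero_iff, hnorm, Int.natAbs_eq_zero]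
    exact hp.ne_zero
  have haQ : a ∈ Q := by
    obtain ⟨e, rfl⟩ := hpd
    refine hQ.mem_of_pow_mem 2 ?_
    rw [ha, Int.cast_mul]
    exact Q.mul_mem_right _ hpQ
  exact ((hprime.isMaximal hne).eq_of_le hQ.ne_top
    (Ideal.span_le.mpr (Set.pair_subset hpQ haQ))).symm

theorem smul_sqrt_eq_neg (hσ : σ ≠ 1) (hd : ¬ IsSquare (d : ℚ)) (ha : a ^ 2 = d) : σ • a = -a := by
  have h : σ (a : K) = -a := gal_apply_eq_neg_of_sq_eq hσ hd (by
    rw [← map_pow, ha, map_intCast, map_intCast])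
  exact RingOfIntegers.ext (h.trans (map_neg (algebraMap (𝓞 K) K) a).symm)

theorem norm_nonneg_of_sq_eq_intCast (hd : d < 0) (ha : a ^ 2 = d) (x : 𝓞 K) :
    0 ≤ Algebra.norm ℤ x := by
  have h := norm_nonneg_of_sq_eq_of_neg (k := ℚ) (c := d) (Int.cast_lt_zero.mpr hd) (α := (a : K))
    (by rw [← map_pow, ha, map_intCast, map_intCast]) x
  rwa [← Algebra.coe_norm_int, Int.cast_nonneg_iff] at h

theorem mem_closure_mk0_of_sq_eq_one (hd : d < 0) (hd4 : d % 4 ≠ 3) (ha : a ^ 2 = d)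
    {x : ClassGroup (𝓞 K)} (hx : x ^ 2 = 1) :
    x ∈ Subgroup.closure (ClassGroup.mk0 ''
      {Q : (Ideal (𝓞 K))⁰ | (Q : Ideal (𝓞 K)).IsPrime ∧ a ∈ (Q : Ideal (𝓞 K))}) := by
  obtain ⟨σ, hσ⟩ := exists_gal_ne_one ℚ K
  have hσa : σ • a = -a :=
    smul_sqrt_eq_neg hσ (fun h ↦ (Int.cast_lt_zero.mpr hd).not_ge h.nonneg) ha
  obtain ⟨I, rfl⟩ := ClassGroup.mk0_surjective x
  obtain ⟨γ, hγ⟩ : ((I : Ideal (𝓞 K)) ^ 2).IsPrincipal := (mk0_sq_eq_one_iff I).mp hx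
  have hγnorm : γ * σ • γ = (Ideal.absNorm (I : Ideal (𝓞 K)) : 𝓞 K) ^ 2 := by
    have h : Algebra.norm ℤ γ = (Ideal.absNorm (I : Ideal (𝓞 K)) ^ 2 : ℕ) := by
      rw [← map_pow, hγ, Ideal.submodule_span_eq, Ideal.absNorm_span_singleton,
        Int.natAbs_of_nonneg (norm_nonneg_of_sq_eq_intCast hd ha γ)]
    rw [← intCast_norm_eq_mul_smul hσ, h]
    push_cast
    rfl
  have hmul := gal_mul_self_eq_one σ
  obtain ⟨J, hσJ, hJ⟩ := exists_smul_eq_self_and_mk0_eq hmul hγ (mul_smul_eq_span_absNorm hσ I)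
    (map_natCast (MulSemiringAction.toRingHom Gal(K/ℚ) (𝓞 K) σ) _) hγnorm
  rw [← hJ]
  refine mk0_mem_of_smul_eq_self hmul (fun Q _ ↦ ⟨_, mul_smul_eq_span_absNorm hσ Q⟩)
    (fun Q hQ hσQ ↦ ?_) hσJ
  have := hQ.isMaximal (nonZeroDivisors.ne_zero Q.2)
  rcases isPrincipal_or_prime_absNorm_of_smul_eq_self hσ hσQ with hprinc | hnorm
  · rw [(ClassGroup.mk0_eq_one_iff Q.2).mpr hprinc]
    exact one_mem _
  · exact Subgroup.subset_closure ⟨Q, ⟨hQ, sqrt_mem_of_smul_eq_self hσa ha hd4 hnorm hσQ⟩, rfl⟩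

end Quadratic

theorem stmt10_general (F : Type*) [Field F] [NumberField F]
    (r : ℕ) (p : Fin r → ℤ) (hp : ∀ i, Prime (p i))
    (d : ℤ) (hd : d = ∏ i, p i) (hneg : d < 0) (hsf : Squarefree d) (hd4 : d % 4 ≠ 3)
    (hdim : Module.finrank ℚ F = 2) (α : F) (hα : α ^ 2 = (d : F))
    (P : Fin r → (Ideal (𝓞 F))⁰)
    (hPprime : ∀ i, (P i : Ideal (𝓞 F)).IsPrime)
    (hPover : ∀ i, algebraMap ℤ (𝓞 F) (p i) ∈ (P i : Ideal (𝓞 F))) :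
    (∏ i, ClassGroup.mk0 (P i)) = 1 ∧
    ∀ x : ClassGroup (𝓞 F),
      x ∈ Subgroup.closure (Set.range fun i => ClassGroup.mk0 (P i)) ↔ x ^ 2 = 1 := by
  have : Algebra.IsQuadraticExtension ℚ F := ⟨hdim⟩
  obtain ⟨a, rfl⟩ : ∃ a : 𝓞 F, (a : F) = α :=
    ⟨⟨α, .of_pow two_pos (hα ▸ isIntegral_intCast d)⟩, rfl⟩
  have ha : a ^ 2 = d := RingOfIntegers.ext (hα.trans (map_intCast (algebraMap (𝓞 F) F) d).symm)
  have hpd (i) : p i ∣ d := hd ▸ Finset.dvd_prod_of_mem p (Finset.mem_univ i)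
  have hP (i) : (P i : Ideal (𝓞 F)) = Ideal.span {(p i : 𝓞 F), a} :=
    eq_span_of_intCast_mem (hp i) (hpd i) hsf ha (hPover i)
  have hPsq (i) : (P i : Ideal (𝓞 F)) ^ 2 = Ideal.span {(p i : 𝓞 F)} :=
    hP i ▸ span_intCast_pair_sq (hpd i) hsf ha
  refine ⟨?_, fun x ↦ ⟨fun hx ↦ ?_, fun hx ↦ ?_⟩⟩
  · have hprod : ∏ i, (P i : Ideal (𝓞 F)) = Ideal.span {a} := by
      rw [← pow_left_inj two_ne_zero, ← Finset.prod_pow, Finset.prod_congr rfl fun i _ ↦ hPsq i,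
        Ideal.prod_span_singleton, Ideal.span_singleton_pow, ha, hd, Int.cast_prod]
    rw [← map_prod, ClassGroup.mk0_eq_one_iff (∏ i, P i).2, Submonoid.coe_finsetProd, hprod]
    exact ⟨a, rfl⟩
  · have hle : Subgroup.closure (Set.range fun i ↦ ClassGroup.mk0 (P i)) ≤
        (powMonoidHom 2 : ClassGroup (𝓞 F) →* ClassGroup (𝓞 F)).ker :=
      (Subgroup.closure_le _).mpr (Set.range_subset_iff.mpr fun i ↦
        (mk0_sq_eq_one_iff (P i)).mpr ⟨_, hPsq i⟩)
    exact hle hx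
  · refine Subgroup.closure_mono ?_ (mem_closure_mk0_of_sq_eq_one hneg hd4 ha hx)
    rintro _ ⟨Q, ⟨hQ, haQ⟩, rfl⟩
    obtain ⟨i, -, hi⟩ : ∃ i ∈ Finset.univ, (p i : 𝓞 F) ∈ (Q : Ideal (𝓞 F)) := by
      rw [← hQ.prod_mem_iff, ← Int.cast_prod, ← hd, ← ha]
      exact Ideal.pow_mem_of_mem _ haQ 2 two_pos
    exact ⟨i, congrArg _ (Subtype.ext ((hP i).trans
      (eq_span_of_intCast_mem (hp i) (hpd i) hsf ha hi).symm))⟩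

/-- Let `F = ℚ(√d)` be an imaginary quadratic field with `d = p₁⋯p_r < 0` a squarefree
product of (signed) primes with `d ≡ 1 (mod 4)`, and let `𝔭_i` be the prime of `O_F`
above `p_i`.  Then the 2-torsion subgroup `cl(F)[2]` of the class group is generated by
the classes `[𝔭₁],…,[𝔭_r]`, and these satisfy the relation `[𝔭₁]+⋯+[𝔭_r] = 0`
(written multiplicatively below). -/
theorem stmt10 (F : Type) [Field F] [NumberField F]
    (r : ℕ) (p : Fin r → ℤ) (hp : ∀ i, Prime (p i))
    (d : ℤ) (hd : d = ∏ i, p i) (hneg : d < 0) (hsf : Squarefree d) (hd4 : d % 4 = 1)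
    (hdim : Module.finrank ℚ F = 2) (α : F) (hα : α ^ 2 = (d : F))
    (P : Fin r → (Ideal (𝓞 F))⁰)
    (hPprime : ∀ i, (P i : Ideal (𝓞 F)).IsPrime)
    (hPover : ∀ i, algebraMap ℤ (𝓞 F) (p i) ∈ (P i : Ideal (𝓞 F))) :
    (∏ i, ClassGroup.mk0 (P i)) = 1 ∧
    ∀ x : ClassGroup (𝓞 F),
      x ∈ Subgroup.closure (Set.range fun i => ClassGroup.mk0 (P i)) ↔ x ^ 2 = 1 :=
  stmt10_general F r p hp d hd hneg hsf (by omega) hdim α hα P hPprime hPover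
end

section
/- Let G be a finite cyclic group of order n with generator, and let k = 0 if n is odd and k = n/2 if n is even. Then the cohomology ring H*(G, ℤ/n) with trivial coefficients is isomorphic to (ℤ/n)[x,y]/(x² - ky), where x has degree 1 and y has degree 2. -/
/-- Inhomogeneous `i`-cochains of the cyclic group `ℤ/n` with trivial coefficients `ℤ/n`. -/
abbrev Coch (n i : ℕ) := (Fin i → Multiplicative (ZMod n)) → ZMod n

/-- The tuple obtained from `y` by multiplying the entries at positions `k` and `k+1`. -/
def contractC {n i : ℕ} (y : Fin (i + 1) → Multiplicative (ZMod n)) (k : Fin i) :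
    Fin i → Multiplicative (ZMod n) :=
  fun j => if (j : ℕ) < (k : ℕ) then y (Fin.castSucc j)
    else if (j : ℕ) = (k : ℕ) then y (Fin.castSucc j) * y (Fin.succ j)
    else y (Fin.succ j)

/-- The differential on inhomogeneous cochains (trivial action on coefficients). -/
def dT {n i : ℕ} (c : Coch n i) : Coch n (i + 1) :=
  fun y => c (Fin.tail y)
    + ∑ k : Fin i, ((-1 : ℤ) ^ ((k : ℕ) + 1)) • c (contractC y k)
    + ((-1 : ℤ) ^ (i + 1)) • c (Fin.init y)

/-- Cup product of cochains (trivial action). -/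
def cupC {n i j : ℕ} (c : Coch n i) (c' : Coch n j) : Coch n (i + j) :=
  fun y => c (fun t => y (Fin.castAdd j t)) * c' (fun t => y (Fin.natAdd i t))

/-- Transport of cochains along an equality of degrees. -/
def castCoch {n a b : ℕ} (h : a = b) (c : Coch n a) : Coch n b :=
  fun y => c (fun t => y (Fin.cast h t))

/-- Cup powers `y^{m+1}` of a degree 2 cochain. -/
def ypowC {n : ℕ} (y : Coch n 2) : (m : ℕ) → Coch n (2 * m + 2)
  | 0 => y
  | m + 1 => castCoch (by ring) (cupC y (ypowC y m))

/-!
The periodic resolution of the cyclic group `ℤ/n` exhibits every `H^{i+1}(ℤ/n, ℤ/n)` as a cyclic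
`ℤ/n`-module. The generator of degree `i` of that resolution maps to an explicit chain of the bar
complex, and evaluating cochains on it gives a functional which kills coboundaries and which is
multiplicative on products `c ∪ c'` with `c'` of even degree. It takes the value `1` on the identity
homomorphism `x` and on the carry cocycle `y`, hence on every monomial `y^m` and `x y^m`, and a
class on which a functional takes the value `1` generates a cyclic `ℤ/n`-module freely.

The carry cocycle is characterised by `a + b = r + n · carry a b`, where `a, b, r < n` are the
representatives of two residues and of their sum. Since
`(a + b).choose 2 = a.choose 2 + b.choose 2 + a * b` and, modulo `n`,
`(r + n * c).choose 2 = r.choose 2 + c * n.choose 2`, the cochain `a ↦ -a.choose 2` bounds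
`x² - (n.choose 2) y`; finally `n.choose 2 = n (n - 1) / 2` is congruent to `k`.
-/

section GroupCohomology

open CategoryTheory

universe u

variable {k G : Type u} [CommRing k]

lemma exists_d_eq_of_π_eq_zero [Group G] {A : Rep k G} {i : ℕ}
    {z : groupCohomology.cocycles A (i + 1)} (hz : groupCohomology.π A (i + 1) z = 0) :
    ∃ b : (Fin i → G) → A,
      inhomogeneousCochains.d A i b = groupCohomology.iCocycles A (i + 1) z := by
  let K := groupCohomology.inhomogeneousCochains A
  let S := ShortComplex.mk (K.toCycles i (i + 1)) (K.homologyπ (i + 1)) (by simp)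
  have hS : S.Exact := S.exact_of_g_is_cokernel (K.homologyIsCokernel i (i + 1) (by simp))
  obtain ⟨b, rfl⟩ := S.moduleCat_exact_iff.1 hS z hz
  refine ⟨b, ?_⟩
  rw [← groupCohomology.inhomogeneousCochains.d_def, ← K.toCycles_i]
  rfl

lemma isPrincipal_groupCohomology_trivial_succ [IsPrincipalIdealRing k] [CommGroup G] [Finite G]
    {t : G} (ht : ∀ g, g ∈ Subgroup.zpowers t) (i : ℕ) :
    Module.IsPrincipal k (groupCohomology (Rep.trivial k G k) (i + 1)) := by
  have := Fintype.ofFinite G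
  have isPrincipal_of_epi {P : Submodule k k}
      {f : ModuleCat.of k P ⟶ groupCohomology (Rep.trivial k G k) (i + 1)} (hf : Epi f) :
      Module.IsPrincipal k (groupCohomology (Rep.trivial k G k) (i + 1)) :=
    have := Module.isPrincipal_submodule_iff.2 (IsPrincipalIdealRing.principal P)
    .of_surjective f.hom ((ModuleCat.epi_iff_surjective f).1 hf)
  have epi_inv {X Y : ModuleCat.{u} k} (e : X ≅ Y) : Epi e.inv := inferInstance
  rcases Nat.even_or_odd (i + 1) with hi | hi
  · exact isPrincipal_of_epi
      (f := Rep.FiniteCyclicGroup.groupCohomologyπEven (Rep.trivial k G k) t ht (i + 1) hi)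
      (epi_comp' (epi_inv _) (epi_comp' inferInstance (epi_inv _)))
  · exact isPrincipal_of_epi
      (f := Rep.FiniteCyclicGroup.groupCohomologyπOdd (Rep.trivial k G k) t ht (i + 1) hi)
      (epi_comp' (epi_inv _) (epi_comp' inferInstance (epi_inv _)))

end GroupCohomology

namespace Coch

section Differential

variable {n i : ℕ}

lemma contractNth_castSucc (v : Fin (i + 1) → Multiplicative (ZMod n)) (j : Fin i) :
    Fin.contractNth j.castSucc (· * ·) v = contractC v j := by
  funext l
  simp [Fin.contractNth, contractC]

lemma contractNth_last (v : Fin (i + 1) → Multiplicative (ZMod n)) :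
    Fin.contractNth (Fin.last i) (· * ·) v = Fin.init v := by
  funext l
  simp [Fin.contractNth, Fin.init]

lemma d_trivial_apply (c : Coch n i) :
    inhomogeneousCochains.d (Rep.trivial (ZMod n) (Multiplicative (ZMod n)) (ZMod n)) i c =
      dT c := by
  funext v
  rw [inhomogeneousCochains.d_hom_apply, Fin.sum_univ_castSucc]
  simp only [contractNth_castSucc, contractNth_last]
  simp only [dT, Fin.val_castSucc, Fin.val_last, smul_eq_mul, zsmul_eq_mul, Int.cast_pow,
    Int.cast_neg, Int.cast_one, add_assoc]
  rfl

lemma dT_sub (c c' : Coch n i) : dT (c - c') = dT c - dT c' := by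
  simp only [← d_trivial_apply, map_sub]

lemma dT_smul (a : ZMod n) (c : Coch n i) : dT (a • c) = a • dT c := by
  simp only [← d_trivial_apply, map_smul]

lemma dT_degree_zero (c : Coch n 0) : dT c = 0 := by
  funext v
  simp [dT, Subsingleton.elim (Fin.tail v) (Fin.init v)]

lemma dT_degree_one_apply (c : Coch n 1) (v : Fin 2 → Multiplicative (ZMod n)) :
    dT c v = c ![v 1] - c ![v 0 * v 1] + c ![v 0] := by
  have tail_eq : Fin.tail v = ![v 1] := funext (Fin.forall_fin_one.2 rfl)
  have contract_eq : contractC v 0 = ![v 0 * v 1] := funext (Fin.forall_fin_one.2 rfl)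
  have init_eq : Fin.init v = ![v 0] := funext (Fin.forall_fin_one.2 rfl)
  simp [dT, tail_eq, contract_eq, init_eq, sub_eq_add_neg]

lemma dT_degree_two_apply (c : Coch n 2) (v : Fin 3 → Multiplicative (ZMod n)) :
    dT c v = c ![v 1, v 2] - c ![v 0 * v 1, v 2] + c ![v 0, v 1 * v 2] - c ![v 0, v 1] := by
  have tail_eq : Fin.tail v = ![v 1, v 2] := funext (Fin.forall_fin_two.2 ⟨rfl, rfl⟩)
  have contract_zero : contractC v 0 = ![v 0 * v 1, v 2] :=
    funext (Fin.forall_fin_two.2 ⟨rfl, rfl⟩)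
  have contract_one : contractC v 1 = ![v 0, v 1 * v 2] :=
    funext (Fin.forall_fin_two.2 ⟨rfl, rfl⟩)
  have init_eq : Fin.init v = ![v 0, v 1] := funext (Fin.forall_fin_two.2 ⟨rfl, rfl⟩)
  simp only [dT, Fin.sum_univ_two, Fin.val_zero, Fin.val_one, tail_eq, contract_zero, contract_one,
    init_eq, zsmul_eq_mul]
  push_cast
  ring

lemma dT_castCoch {j : ℕ} (h : i = j) (c : Coch n i) :
    dT (castCoch h c) = castCoch (congrArg (· + 1) h) (dT c) := by
  subst h
  rfl

end Differential

section Leibniz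

variable {n i j : ℕ}

lemma contractC_castAdd_natAdd (v : Fin (i + j + 1) → Multiplicative (ZMod n)) (l : Fin i) :
    (fun t => contractC v (Fin.castAdd j l) (Fin.natAdd i t)) =
      Fin.tail fun t : Fin (j + 1) => v (Fin.natAdd i t) := by
  funext t
  simp only [contractC, Fin.val_natAdd, Fin.val_castAdd, show ¬ i + (t : ℕ) < l by omega,
    show i + (t : ℕ) ≠ l by omega, if_false]
  rfl

lemma contractC_natAdd_castAdd (v : Fin (i + j + 1) → Multiplicative (ZMod n)) (l : Fin j) :
    (fun t => contractC v (Fin.natAdd i l) (Fin.castAdd j t)) =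
      Fin.init fun t : Fin (i + 1) => v (t.castLE (by omega)) := by
  funext t
  simp only [contractC, Fin.val_castAdd, Fin.val_natAdd, show (t : ℕ) < i + l by omega, if_true]
  rfl

lemma contractC_natAdd_natAdd (v : Fin (i + j + 1) → Multiplicative (ZMod n)) (l : Fin j) :
    (fun t => contractC v (Fin.natAdd i l) (Fin.natAdd i t)) =
      contractC (fun t : Fin (j + 1) => v (Fin.natAdd i t)) l := by
  funext t
  simp only [contractC, Fin.val_natAdd, add_lt_add_iff_left, Nat.add_left_cancel_iff]
  rfl

lemma dT_cupC (c : Coch n i) (c' : Coch n j) :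
    dT (cupC c c') = castCoch (Nat.add_right_comm i 1 j) (cupC (dT c) c') +
      (-1 : ZMod n) ^ i • cupC c (dT c') := by
  funext v
  let front : Fin (i + 1) → Multiplicative (ZMod n) := fun t => v (t.castLE (by omega))
  let back : Fin (j + 1) → Multiplicative (ZMod n) := fun t => v (Fin.natAdd i t)
  have tail_front : (fun t => Fin.tail v (Fin.castAdd j t)) = Fin.tail front := rfl
  have tail_back : (fun t => Fin.tail v (Fin.natAdd i t)) = Fin.tail back := rfl
  have init_front : (fun t => Fin.init v (Fin.castAdd j t)) = Fin.init front := rfl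
  have init_back : (fun t => Fin.init v (Fin.natAdd i t)) = Fin.init back := rfl
  have contract_front (l : Fin i) :
      (fun t => contractC v (Fin.castAdd j l) (Fin.castAdd j t)) = contractC front l := rfl
  have cup_dT_left : castCoch (Nat.add_right_comm i 1 j) (cupC (dT c) c') v =
      dT c front * c' (Fin.tail back) := by
    have (t : Fin j) : Fin.cast (Nat.add_right_comm i 1 j) (Fin.natAdd (i + 1) t) =
        Fin.natAdd i t.succ := by
      ext
      simp only [Fin.val_cast, Fin.val_natAdd, Fin.val_succ]
      omega
    simp only [castCoch, cupC, this]
    rfl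
  have cup_dT_right : cupC c (dT c') v = c (Fin.init front) * dT c' back := rfl
  rw [Pi.add_apply, Pi.smul_apply, cup_dT_left, cup_dT_right]
  simp only [dT, cupC, Fin.sum_univ_add, tail_front, tail_back, init_front, init_back,
    contract_front, contractC_castAdd_natAdd, contractC_natAdd_castAdd, contractC_natAdd_natAdd]
  simp only [Fin.val_castAdd, Fin.val_natAdd, pow_add, pow_one, zsmul_eq_mul, smul_eq_mul,
    Int.cast_mul, Int.cast_pow, Int.cast_neg, Int.cast_one, add_mul, mul_add, Finset.sum_mul,
    Finset.mul_sum, mul_assoc, mul_left_comm]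
  ring

lemma dT_castCoch_cupC {l : ℕ} (h : i + j = l) {c : Coch n i} {c' : Coch n j} (hc : dT c = 0)
    (hc' : dT c' = 0) : dT (castCoch h (cupC c c')) = 0 := by
  rw [dT_castCoch, dT_cupC, hc, hc']
  funext v
  simp [castCoch, cupC]

lemma dT_ypowC {y : Coch n 2} (hy : dT y = 0) (m : ℕ) : dT (ypowC y m) = 0 := by
  induction m with
  | zero => exact hy
  | succ m ih => exact dT_castCoch_cupC _ hy ih

end Leibniz

section CycleEval

variable {n i j : ℕ}

/-- The slant of a cochain by a group element: its first argument is fixed to be `g`. -/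
def slice (g : Multiplicative (ZMod n)) : Coch n (i + 1) →ₗ[ZMod n] Coch n i :=
  LinearMap.funLeft (ZMod n) (ZMod n) (Fin.cons (α := fun _ => Multiplicative (ZMod n)) g)

lemma slice_dT (g : Multiplicative (ZMod n)) (c : Coch n (i + 1)) :
    slice g (dT c) = c - (fun v => slice (g * v 0) c (Fin.tail v)) +
      (fun v => slice g c (Fin.tail v)) - dT (slice g c) := by
  have contract_zero (v : Fin (i + 1) → Multiplicative (ZMod n)) :
      contractC (Fin.cons g v : Fin (i + 2) → _) 0 = Fin.cons (g * v 0) (Fin.tail v) := by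
    funext l
    cases l using Fin.cases <;> simp [contractC, Fin.tail]
  have contract_succ (v : Fin (i + 1) → Multiplicative (ZMod n)) (l : Fin i) :
      contractC (Fin.cons g v : Fin (i + 2) → _) l.succ = Fin.cons g (contractC v l) := by
    funext l
    cases l using Fin.cases <;> simp [contractC]
  have init_cons (v : Fin (i + 1) → Multiplicative (ZMod n)) :
      Fin.init (Fin.cons g v : Fin (i + 2) → Multiplicative (ZMod n)) =
        Fin.cons g (Fin.init v) := by
    funext l
    cases l using Fin.cases <;> simp [Fin.init]
  funext v
  simp only [slice, LinearMap.funLeft_apply, dT, Fin.sum_univ_succ, Fin.tail_cons, contract_zero,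
    contract_succ, init_cons, Pi.add_apply, Pi.sub_apply]
  simp only [Fin.val_zero, Fin.val_succ, zero_add, pow_succ, pow_zero, mul_neg, mul_one, neg_neg,
    neg_smul, one_smul, Finset.sum_neg_distrib]
  abel

lemma slice_cupC (g : Multiplicative (ZMod n)) (h : i + 1 + j = i + j + 1) (c : Coch n (i + 1))
    (c' : Coch n j) : slice g (castCoch h (cupC c c')) = cupC (slice g c) c' := by
  have cons_castAdd (v : Fin (i + j) → Multiplicative (ZMod n)) :
      (fun t => (Fin.cons g v : Fin (i + j + 1) → Multiplicative (ZMod n))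
        (Fin.cast h (Fin.castAdd j t))) = Fin.cons g fun t => v (Fin.castAdd j t) := by
    funext t
    cases t using Fin.cases <;> rfl
  have cons_natAdd (v : Fin (i + j) → Multiplicative (ZMod n)) (t : Fin j) :
      (Fin.cons g v : Fin (i + j + 1) → Multiplicative (ZMod n))
        (Fin.cast h (Fin.natAdd (i + 1) t)) = v (Fin.natAdd i t) := by
    have : Fin.cast h (Fin.natAdd (i + 1) t) = (Fin.natAdd i t).succ := by
      ext
      simp only [Fin.val_cast, Fin.val_natAdd, Fin.val_succ]
      omega
    rw [this, Fin.cons_succ]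
  funext v
  simp only [slice, LinearMap.funLeft_apply, castCoch, cupC, cons_castAdd, cons_natAdd]

variable [NeZero n]

/-- Evaluation of cochains on the `i`-chain of the bar complex that generates degree `i` of the
periodic resolution of a cyclic group with generator `t`, where `t` is the class of `1`:
it is `[]` for `i = 0`, and from a chain `z` it is obtained as `[t | z]` when `i` is even and as
`∑ g, [g | z]` when `i` is odd. -/
def cycleEval : (i : ℕ) → Coch n i →ₗ[ZMod n] ZMod n
  | 0 => LinearMap.proj Fin.elim0
  | i + 1 =>
    if Even i then cycleEval i ∘ₗ slice (.ofAdd 1)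
    else ∑ g : Multiplicative (ZMod n), cycleEval i ∘ₗ slice g

lemma cycleEval_succ_of_even (hi : Even i) (c : Coch n (i + 1)) :
    cycleEval (i + 1) c = cycleEval i (slice (.ofAdd 1) c) := by
  simp [cycleEval, hi]

lemma cycleEval_succ_of_odd (hi : Odd i) (c : Coch n (i + 1)) :
    cycleEval (i + 1) c = ∑ g, cycleEval i (slice g c) := by
  simp [cycleEval, Nat.not_even_iff_odd.2 hi]

lemma cycleEval_castCoch (h : i = j) (c : Coch n i) :
    cycleEval j (castCoch h c) = cycleEval i c := by
  subst h
  rfl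

lemma sum_const_eq_zero (a : ZMod n) : ∑ _g : Multiplicative (ZMod n), a = 0 := by
  simp [ZMod.card]

lemma cycleEval_dT (i : ℕ) (c : Coch n i) : cycleEval (i + 1) (dT c) = 0 := by
  induction i with
  | zero => rw [dT_degree_zero, map_zero]
  | succ i ih =>
    have slice_translate (g h : Multiplicative (ZMod n)) :
        slice h (fun v => slice (g * v 0) c (Fin.tail v)) = slice (g * h) c := rfl
    have slice_tail (g h : Multiplicative (ZMod n)) :
        slice h (fun v => slice g c (Fin.tail v)) = slice g c := rfl
    rcases Nat.even_or_odd i with hi | hi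
    · have sum_translate : ∑ g, cycleEval i (slice (g * .ofAdd 1) c) =
          ∑ g, cycleEval i (slice g c) :=
        Equiv.sum_comp (Equiv.mulRight _) fun g => cycleEval i (slice g c)
      rw [cycleEval_succ_of_odd hi.add_one]
      simp only [slice_dT, map_sub, map_add, ih, sub_zero]
      simp only [cycleEval_succ_of_even hi, slice_translate, slice_tail, Finset.sum_add_distrib,
        Finset.sum_sub_distrib, sum_const_eq_zero, sum_translate, zero_sub, neg_add_cancel]
    · have sum_translate : ∑ g, cycleEval i (slice (.ofAdd 1 * g) c) =
          ∑ g, cycleEval i (slice g c) :=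
        Equiv.sum_comp (Equiv.mulLeft _) fun g => cycleEval i (slice g c)
      rw [cycleEval_succ_of_even hi.add_one]
      simp only [slice_dT, map_sub, map_add, ih, sub_zero]
      simp only [cycleEval_succ_of_odd hi, slice_translate, slice_tail, sum_const_eq_zero,
        sum_translate, sub_self, add_zero]

lemma cycleEval_cupC (hj : Even j) (i : ℕ) (c : Coch n i) (c' : Coch n j) :
    cycleEval (i + j) (cupC c c') = cycleEval i c * cycleEval j c' := by
  induction i with
  | zero =>
    have : cupC c c' = castCoch (Nat.zero_add j).symm (c Fin.elim0 • c') := by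
      funext v
      simp [cupC, castCoch, Subsingleton.elim _ Fin.elim0]
    rw [this, cycleEval_castCoch, map_smul]
    rfl
  | succ i ih =>
    rw [← cycleEval_castCoch (Nat.add_right_comm i 1 j)]
    rcases Nat.even_or_odd i with hi | hi
    · rw [cycleEval_succ_of_even (hi.add hj), cycleEval_succ_of_even hi, slice_cupC, ih]
    · simp only [cycleEval_succ_of_odd (hi.add_even hj), cycleEval_succ_of_odd hi, slice_cupC, ih,
        Finset.sum_mul]

lemma cycleEval_ypowC (y : Coch n 2) (m : ℕ) :
    cycleEval (2 * m + 2) (ypowC y m) = cycleEval 2 y ^ (m + 1) := by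
  induction m with
  | zero => rw [zero_add, pow_one]; rfl
  | succ m ih =>
    have : Even (2 * m + 2) := ⟨m + 1, by ring⟩
    exact (cycleEval_castCoch _ _).trans <| by rw [cycleEval_cupC this, ih, ← pow_succ']

end CycleEval

section Cyclic

variable {n i : ℕ} [NeZero n]

variable (n i) in
lemma exists_cocycle_forall_eq_smul_add_dT :
    ∃ z : Coch n (i + 1), dT z = 0 ∧ ∀ c : Coch n (i + 1), dT c = 0 →
      ∃ (a : ZMod n) (b : Coch n i), c = a • z + dT b := by
  let A := Rep.trivial (ZMod n) (Multiplicative (ZMod n)) (ZMod n)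
  have : IsPrincipalIdealRing (ZMod n) :=
    .of_surjective (Int.castRingHom (ZMod n)) ZMod.intCast_surjective
  have one_generates (g : Multiplicative (ZMod n)) : g ∈ Subgroup.zpowers (.ofAdd (1 : ZMod n)) :=
    ⟨g.toAdd.val, Multiplicative.toAdd.injective (by simp)⟩
  have := isPrincipal_groupCohomology_trivial_succ (k := ZMod n) one_generates i
  obtain ⟨w, hw⟩ : ∃ w, ∀ x : groupCohomology A (i + 1), ∃ a : ZMod n, x = a • w :=
    ⟨_, fun x => (Submodule.IsPrincipal.mem_iff_eq_smul_generator ⊤).1 (Submodule.mem_top (x := x))⟩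
  obtain ⟨z, rfl⟩ : ∃ z, groupCohomology.π A (i + 1) z = w :=
    groupCohomology_induction_on w fun z => ⟨z, rfl⟩
  refine ⟨groupCohomology.iCocycles A (i + 1) z, ?_, fun c hc => ?_⟩
  · rw [← d_trivial_apply, ← groupCohomology.inhomogeneousCochains.d_def]
    exact CategoryTheory.ConcreteCategory.congr_hom
      ((groupCohomology.inhomogeneousCochains A).iCycles_d (i + 1) (i + 2)) z
  · let zc : groupCohomology.cocycles A (i + 1) :=
      groupCohomology.cocyclesMk c ((d_trivial_apply c).trans hc)
    obtain ⟨a, ha⟩ := hw (groupCohomology.π A (i + 1) zc)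
    have hπ : groupCohomology.π A (i + 1) (zc - a • z) = 0 := by
      rw [map_sub, map_smul, ha, sub_self]
    obtain ⟨b, hb⟩ := exists_d_eq_of_π_eq_zero hπ
    refine ⟨a, b, ?_⟩
    rw [← d_trivial_apply, hb, map_sub, map_smul, groupCohomology.iCocycles_mk]
    abel

lemma existsUnique_eq_smul_add_dT {z : Coch n (i + 1)} (hz : dT z = 0)
    (hz1 : cycleEval (i + 1) z = 1) {c : Coch n (i + 1)} (hc : dT c = 0) :
    ∃! a : ZMod n, ∃ b : Coch n i, c = a • z + dT b := by
  have eq_cycleEval {a : ZMod n} {b : Coch n i} (h : c = a • z + dT b) :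
      a = cycleEval (i + 1) c := by
    simp [h, cycleEval_dT, hz1]
  obtain ⟨w, -, hw⟩ := exists_cocycle_forall_eq_smul_add_dT n i
  obtain ⟨r, bz, hzw⟩ := hw z hz
  obtain ⟨s, bc, hcw⟩ := hw c hc
  have hr : r * cycleEval (i + 1) w = 1 := by
    simpa [cycleEval_dT, hz1] using (congrArg (cycleEval (i + 1)) hzw).symm
  let a := s * cycleEval (i + 1) w
  have hc_eq : c = a • z + dT (bc - a • bz) := by
    have : s = a * r := by linear_combination -s * hr
    rw [dT_sub, dT_smul, hcw, hzw, this, mul_smul, smul_add]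
    abel
  exact ⟨a, ⟨_, hc_eq⟩, fun a' ⟨_, h⟩ => (eq_cycleEval h).trans (eq_cycleEval hc_eq).symm⟩

end Cyclic

section Carry

variable {n : ℕ}

/-- The carry of the addition of the residues `a` and `b`, written as numbers in `[0, n)`;
modulo `n` it is the cocycle of the extension `ℤ/n → ℤ/n² → ℤ/n`. -/
def carry (a b : ZMod n) : ℕ := (a.val + b.val) / n

variable [NeZero n]

lemma val_add_add_mul_carry (a b : ZMod n) : (a + b).val + n * carry a b = a.val + b.val := by
  rw [ZMod.val_add, carry, Nat.mod_add_div]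

lemma carry_add_carry_add (a b c : ZMod n) :
    carry b c + carry a (b + c) = carry (a + b) c + carry a b := by
  have hbc := val_add_add_mul_carry b c
  have ha_bc := val_add_add_mul_carry a (b + c)
  have hab := val_add_add_mul_carry a b
  have hab_c := val_add_add_mul_carry (a + b) c
  rw [add_assoc a b c] at hab_c
  apply Nat.eq_of_mul_eq_mul_left (NeZero.pos n)
  rw [mul_add, mul_add]
  omega

lemma sum_carry (b : ZMod n) : ∑ a, carry a b = b.val := by
  have sum_translate : ∑ a : ZMod n, (a + b).val = ∑ a : ZMod n, a.val :=
    Equiv.sum_comp (Equiv.addRight b) ZMod.val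
  have sum_spec := Finset.sum_congr (rfl : (Finset.univ : Finset (ZMod n)) = _)
    fun a _ => val_add_add_mul_carry a b
  rw [Finset.sum_add_distrib, Finset.sum_add_distrib, sum_translate, ← Finset.mul_sum,
    Finset.sum_const, Finset.card_univ, ZMod.card, smul_eq_mul] at sum_spec
  exact Nat.eq_of_mul_eq_mul_left (NeZero.pos n) (Nat.add_left_cancel sum_spec)

end Carry

section Generators

variable {n : ℕ}

/-- The degree-one generator `x`: the identity homomorphism of `ℤ/n`, as a `1`-cocycle. -/
def identityCocycle (n : ℕ) : Coch n 1 := fun v => (v 0).toAdd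

/-- The degree-two generator `y`: the carry cocycle, reduced modulo `n`. -/
def carryCocycle (n : ℕ) : Coch n 2 := fun v => carry (v 0).toAdd (v 1).toAdd

lemma dT_identityCocycle : dT (identityCocycle n) = 0 := by
  funext v
  simp [dT_degree_one_apply, identityCocycle]

lemma dT_carryCocycle [NeZero n] : dT (carryCocycle n) = 0 := by
  funext v
  have h (a b c : ZMod n) :
      (carry b c + carry a (b + c) : ZMod n) = carry (a + b) c + carry a b :=
    mod_cast congrArg _ (carry_add_carry_add a b c)
  rw [dT_degree_two_apply]
  simp only [carryCocycle, Matrix.cons_val_zero, Matrix.cons_val_one, toAdd_mul, Pi.zero_apply]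
  linear_combination h (v 0).toAdd (v 1).toAdd (v 2).toAdd

lemma cycleEval_identityCocycle [NeZero n] : cycleEval 1 (identityCocycle n) = 1 := rfl

lemma cycleEval_carryCocycle [NeZero n] : cycleEval 2 (carryCocycle n) = 1 := calc
  cycleEval 2 (carryCocycle n) = ∑ a : ZMod n, (carry a 1 : ZMod n) := by
    rw [cycleEval_succ_of_odd odd_one]
    exact Fintype.sum_equiv Multiplicative.toAdd _ _ fun _ => rfl
  _ = 1 := by rw [← Nat.cast_sum, sum_carry, ZMod.natCast_zmod_val]

lemma cycleEval_ypowC_carryCocycle [NeZero n] (m : ℕ) :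
    cycleEval (2 * m + 2) (ypowC (carryCocycle n) m) = 1 := by
  rw [cycleEval_ypowC, cycleEval_carryCocycle, one_pow]

lemma cycleEval_identityCocycle_cupC_ypowC [NeZero n] (m : ℕ) :
    cycleEval (1 + (2 * m + 2)) (cupC (identityCocycle n) (ypowC (carryCocycle n) m)) = 1 := by
  have even_degree : Even (2 * m + 2) := ⟨m + 1, by ring⟩
  rw [cycleEval_cupC even_degree, cycleEval_identityCocycle, cycleEval_ypowC_carryCocycle, one_mul]

end Generators

section CupSquare

variable {n : ℕ}

lemma add_choose_two (a b : ℕ) :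
    (a + b).choose 2 = a.choose 2 + b.choose 2 + a * b := by
  simp only [Nat.add_choose_eq, Finset.Nat.sum_antidiagonal_eq_sum_range_succ_mk,
    Finset.sum_range_succ, Finset.sum_range_zero, Nat.choose_zero_right, Nat.choose_one_right,
    Nat.sub_zero, Nat.sub_self, Nat.reduceSub]
  ring

lemma natCast_add_mul_choose_two (r c : ℕ) :
    (((r + n * c).choose 2 : ℕ) : ZMod n) = r.choose 2 + c * n.choose 2 := by
  induction c with
  | zero => simp
  | succ c ih =>
    rw [mul_add_one, ← add_assoc, add_choose_two]
    push_cast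
    rw [ih, ZMod.natCast_self]
    ring

lemma natCast_choose_two_self :
    (n.choose 2 : ZMod n) = ((if Odd n then 0 else n / 2 : ℕ) : ZMod n) := by
  split_ifs with hn
  · obtain ⟨m, rfl⟩ := hn
    have : (2 * m + 1).choose 2 = (2 * m + 1) * m := by
      rw [Nat.choose_two_right, Nat.add_sub_cancel]
      exact Nat.div_eq_of_eq_mul_left two_pos (by ring)
    rw [this, Nat.cast_mul, ZMod.natCast_self, zero_mul, Nat.cast_zero]
  · obtain ⟨_ | m, rfl⟩ := (Nat.not_odd_iff_even.1 hn).exists_two_nsmul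
    · rfl
    · have : (2 • (m + 1)).choose 2 = 2 • (m + 1) * m + 2 • (m + 1) / 2 := by
        have half : 2 • (m + 1) / 2 = m + 1 := Nat.mul_div_cancel_left _ two_pos
        rw [Nat.choose_two_right, half, show 2 • (m + 1) - 1 = 2 * m + 1 from rfl]
        exact Nat.div_eq_of_eq_mul_left two_pos (by simp only [smul_eq_mul]; ring)
      rw [this, Nat.cast_add, Nat.cast_mul, ZMod.natCast_self, zero_mul, zero_add]

lemma exists_cupC_identityCocycle_self_eq [NeZero n] :
    ∃ b : Coch n 1, cupC (identityCocycle n) (identityCocycle n) =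
      (n.choose 2 : ZMod n) • carryCocycle n + dT b := by
  refine ⟨fun v => -((v 0).toAdd.val.choose 2 : ℕ), funext fun v => ?_⟩
  have quadratic (a b : ZMod n) : (a.val.choose 2 + b.val.choose 2 + a * b : ZMod n) =
      (a + b).val.choose 2 + carry a b * n.choose 2 := by
    rw [← natCast_add_mul_choose_two, val_add_add_mul_carry, add_choose_two]
    simp
  have cup_eq : cupC (identityCocycle n) (identityCocycle n) v = (v 0).toAdd * (v 1).toAdd := rfl
  rw [cup_eq, Pi.add_apply, Pi.smul_apply, smul_eq_mul, carryCocycle, dT_degree_one_apply]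
  simp only [Matrix.cons_val_zero, toAdd_mul]
  linear_combination quadratic (v 0).toAdd (v 1).toAdd

end CupSquare

end Coch

/-- For the cyclic group `G = ℤ/n` (with `k = 0` if `n` is odd and `k = n/2` if `n` is
even), the cohomology ring `H*(G, ℤ/n)` is `(ℤ/n)[x,y]/(x² - ky)` with `deg x = 1`,
`deg y = 2`: there are cocycles `x, y` with `x ∪ x = k·y` up to coboundary, such that
`H⁰ ≅ ℤ/n`, and each positive-degree cohomology group is freely generated over `ℤ/n`
by the class of the appropriate monomial `y^m` or `x·y^m`. -/
theorem stmt12 (n : ℕ) (hn : 0 < n) (k : ℕ) (hk : k = if Odd n then 0 else n / 2) :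
    ∃ (x : Coch n 1) (y : Coch n 2), dT x = 0 ∧ dT y = 0 ∧
      (∃ b : Coch n 1, cupC x x = (k : ZMod n) • y + dT b) ∧
      (Function.Bijective fun c : ZMod n => (fun _ => c : Coch n 0)) ∧
      (∀ c : Coch n 1, dT c = 0 → ∃! a : ZMod n, ∃ b : Coch n 0, c = a • x + dT b) ∧
      (∀ m : ℕ, ∀ c : Coch n (2 * m + 2), dT c = 0 →
        ∃! a : ZMod n, ∃ b : Coch n (2 * m + 1), c = a • ypowC y m + dT b) ∧
      (∀ m : ℕ, ∀ c : Coch n (2 * m + 3), dT c = 0 →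
        ∃! a : ZMod n, ∃ b : Coch n (2 * m + 2),
          c = a • castCoch (by ring) (cupC x (ypowC y m)) + dT b) := by
  have : NeZero n := ⟨hn.ne'⟩
  have dT_ypow (m : ℕ) : dT (ypowC (Coch.carryCocycle n) m) = 0 :=
    Coch.dT_ypowC Coch.dT_carryCocycle m
  refine ⟨Coch.identityCocycle n, Coch.carryCocycle n, Coch.dT_identityCocycle,
    Coch.dT_carryCocycle, ?square, ?degree_zero, ?degree_one, fun m c => ?even, fun m c => ?odd⟩
  case square =>
    rw [hk, ← Coch.natCast_choose_two_self]
    exact Coch.exists_cupC_identityCocycle_self_eq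
  case degree_zero => exact (Equiv.funUnique _ _).symm.bijective
  case degree_one =>
    exact fun c => Coch.existsUnique_eq_smul_add_dT Coch.dT_identityCocycle
      Coch.cycleEval_identityCocycle
  case even =>
    exact Coch.existsUnique_eq_smul_add_dT (dT_ypow m) (Coch.cycleEval_ypowC_carryCocycle m)
  case odd =>
    exact Coch.existsUnique_eq_smul_add_dT
      (Coch.dT_castCoch_cupC _ Coch.dT_identityCocycle (dT_ypow m))
      ((Coch.cycleEval_castCoch _ _).trans (Coch.cycleEval_identityCocycle_cupC_ypowC m))
end

section
/- Let Δ and π be groups (π a tuple of groups with maps to Δ) and A, B, C discrete Δ-modules with a pairing A ⊗ B → C. On the relative (cone) cohomology H*(Δ,π;−), the cup products (α,β) ∪ γ = (α ∪ γ, β ∪ γ|_π) and γ ∪ (α,β) = (γ ∪ α, (-1)^{deg γ} γ|_π ∪ β) satisfy graded commutativity: (α,β) ∪ γ = (-1)^{ij} γ ∪ (α,β) for (α,β) ∈ H^i(Δ,π;A) and γ ∈ H^j(Δ,B). -/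
/-- The tuple obtained from `y` by multiplying the entries at positions `k` and `k+1`. -/
def contractG {G : Type*} [Group G] {i : ℕ} (y : Fin (i + 1) → G) (k : Fin i) :
    Fin i → G :=
  fun j => if (j : ℕ) < (k : ℕ) then y (Fin.castSucc j)
    else if (j : ℕ) = (k : ℕ) then y (Fin.castSucc j) * y (Fin.succ j)
    else y (Fin.succ j)

/-- The inhomogeneous differential on cochains of `G` with values in a `Δ`-module `M`,
where `G` acts through the homomorphism `f : G → Δ`. -/
def dRel {G Δ M : Type*} [Group G] [Group Δ] [AddCommGroup M] [DistribMulAction Δ M]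
    (f : G →* Δ) {i : ℕ} (c : (Fin i → G) → M) : (Fin (i + 1) → G) → M :=
  fun y => f (y 0) • c (Fin.tail y)
    + ∑ k : Fin i, ((-1 : ℤ) ^ ((k : ℕ) + 1)) • c (contractG y k)
    + ((-1 : ℤ) ^ (i + 1)) • c (Fin.init y)

/-- Cup product of cochains with respect to a pairing `p : A ⊗ B → C`:
`(c ∪ c')(y₁,…,y_{i+j}) = p(c(y₁,…,y_i), (y₁⋯y_i)·c'(y_{i+1},…,y_{i+j}))`. -/
def cupP {G Δ A B C : Type*} [Group G] [Group Δ] [AddCommGroup A] [AddCommGroup B]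
    [AddCommGroup C] [DistribMulAction Δ B] (f : G →* Δ) (p : A →+ B →+ C) {i j : ℕ}
    (c : (Fin i → G) → A) (c' : (Fin j → G) → B) : (Fin (i + j) → G) → C :=
  fun y => p (c (fun t => y (Fin.castAdd j t)))
    (f (List.ofFn (fun t : Fin i => y (Fin.castAdd j t))).prod •
      c' (fun t => y (Fin.natAdd i t)))

/-- Transport of cochains along an equality of degrees. -/
def castC {G M : Type*} {a b : ℕ} (h : a = b) (c : (Fin a → G) → M) :
    (Fin b → G) → M :=
  fun y => c (fun t => y (Fin.cast h t))

/-!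
Steenrod's `∪₁`-product is a homotopy between `F ∪ F'` and `± F' ∪ F`:
`F ∪ F' - (-1)^{ab} F' ∪ F = d(F ∪₁ F') + dF ∪₁ F' + (-1)^a F ∪₁ dF'`.
It is natural in the group. For a relative cocycle `(α, β)` and a cocycle `γ` the formula over `Δ`
gives `d(α ∪₁ γ)`, while over `π` the term `dβ ∪₁ γ|_π = -(α ∪₁ γ)|_π` appears besides
`d(β ∪₁ γ|_π)`. Hence `(α ∪₁ γ, -β ∪₁ γ|_π)` is a relative cochain whose coboundary is the
required difference.

On homogeneous cochains, where a face is a plain reindexing of the vertices, the formula expresses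
a cancellation of faces: the sums over the faces of `F` in `d(F ∪₁ F')` and in `dF ∪₁ F'` differ
only in the two extreme terms, which are the two cup products.
-/

section Coface

/-- The increasing map `ℕ → ℕ` that omits the value `m`; precomposition with it removes the `m`-th
vertex of a sequence. -/
def coface (m t : ℕ) : ℕ := if t < m then t else t + 1

/-- The map `0, …, k, k + b, k + b + 1, …`, selecting the vertices at which the first factor of the
`k`-th term of `F ∪₁ F'` is evaluated. For `b = 0` the value `k` is taken twice. -/
def leap (b k t : ℕ) : ℕ := if t ≤ k then t else t + b - 1

variable {b k m : ℕ}

theorem coface_comp_leap_of_le (h : m ≤ k) : coface m ∘ leap b k = leap b (k + 1) ∘ coface m := by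
  funext t
  simp only [Function.comp, coface, leap]
  grind

theorem coface_comp_leap_of_pos_of_le (h₀ : 0 < m) (h : m ≤ b) :
    coface (m + k) ∘ leap b k = leap (b + 1) k := by
  funext t
  simp only [Function.comp, coface, leap]
  grind

theorem coface_comp_leap_of_lt (h : k < m) :
    coface (m + b) ∘ leap b k = leap b k ∘ coface (m + 1) := by
  funext t
  simp only [Function.comp, coface, leap]
  grind

theorem leap_comp_coface_succ : leap b k ∘ coface (k + 1) = leap (b + 1) k := by
  funext t
  simp only [Function.comp, coface, leap]
  grind

theorem leap_succ_comp_coface_succ : leap b (k + 1) ∘ coface (k + 1) = leap (b + 1) k := by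
  funext t
  simp only [Function.comp, coface, leap]
  grind

theorem leap_zero_comp_coface_zero : leap b 0 ∘ coface 0 = (· + b) := by
  funext t
  simp only [Function.comp, coface, leap]
  grind

theorem coface_comp_add_of_le (h : m ≤ k) : coface m ∘ (· + k) = (· + (k + 1)) := by
  funext t
  simp only [Function.comp, coface]
  grind

theorem coface_add_comp_add : coface (m + k) ∘ (· + k) = (· + k) ∘ coface m := by
  funext t
  simp only [Function.comp, coface]
  grind

end Coface

section SequenceCochains

variable {X A B C : Type*}

/-- The pullback of a cochain along the removal of the `m`-th vertex. Cochains are functions of an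
infinite sequence of vertices, and an `n`-cochain is one that depends on the vertices `0, …, n`
only; so no transport between the types `Fin n` is needed. -/
def face (m : ℕ) (F : (ℕ → X) → A) : (ℕ → X) → A := fun x => F (x ∘ coface m)

theorem face_eq_self_of_dependsOn {a m : ℕ} {F : (ℕ → X) → A} (hF : DependsOn F (Set.Iic a))
    (h : a < m) : face m F = F := by
  ext x
  refine hF fun t ht => ?_
  simp [coface, (Set.mem_Iic.mp ht).trans_lt h]

variable [AddCommGroup A] [AddCommGroup B] [AddCommGroup C]

/-- The simplicial coboundary with values in degree `n`. The index is the degree of the result, so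
that `F` is thought of as an `(n - 1)`-cochain; this makes sense for `n = 0` as well. -/
def coboundary (n : ℕ) (F : (ℕ → X) → A) : (ℕ → X) → A :=
  ∑ m ∈ Finset.range (n + 1), (-1 : ℤ) ^ m • face m F

/-- The Alexander–Whitney cup product of an `a`-cochain with a cochain of any degree. -/
def cup (p : A →+ B →+ C) (a : ℕ) (F : (ℕ → X) → A) (F' : (ℕ → X) → B) : (ℕ → X) → C :=
  fun x => p (F x) (F' (x ∘ (· + a)))

/-- The `k`-th term, up to sign, of the `∪₁`-product with a `b`-cochain `F'`: the simplex
`k, …, k + b` is fed to `F'` and is replaced by its long edge in the argument of `F`. -/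
def cupOneTerm (p : A →+ B →+ C) (b k : ℕ) (F : (ℕ → X) → A) (F' : (ℕ → X) → B) :
    (ℕ → X) → C :=
  fun x => p (F (x ∘ leap b k)) (F' (x ∘ (· + k)))

/-- The sign of the `k`-th term of the `∪₁`-product in degrees `a` and `b`. -/
def cupOneSign (a b k : ℕ) : ℤ := (-1) ^ ((a + k + 1) * (b + 1) + a)

/-- Steenrod's `∪₁`-product of an `a`-cochain and a `b`-cochain, of degree `a + b - 1`. -/
def cupOne (p : A →+ B →+ C) (a b : ℕ) (F : (ℕ → X) → A) (F' : (ℕ → X) → B) : (ℕ → X) → C :=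
  ∑ k ∈ Finset.range a, cupOneSign a b k • cupOneTerm p b k F F'

theorem cupOneSign_succ_left (a b k : ℕ) :
    cupOneSign (a + 1) b k = (-1) ^ b * cupOneSign a b k := by
  simp only [cupOneSign]
  ring

theorem cupOneSign_succ_succ (a b k : ℕ) :
    cupOneSign (a + 1) b (k + 1) = -cupOneSign a b k := by
  rw [cupOneSign, cupOneSign, show (a + 1 + (k + 1) + 1) * (b + 1) + (a + 1) =
    (a + k + 1) * (b + 1) + a + 2 * (b + 1) + 1 by ring, pow_succ, pow_add, pow_mul]
  simp

theorem cupOneSign_mul_neg_one_pow (a b k : ℕ) :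
    cupOneSign a b k * (-1) ^ k = -((-1) ^ a * cupOneSign a (b + 1) k) := by
  rw [cupOneSign, cupOneSign, ← pow_add, ← pow_add, show a + ((a + k + 1) * (b + 1 + 1) + a) =
    (a + k + 1) * (b + 1) + a + k + 2 * a + 1 by ring, pow_succ, pow_add _ _ (2 * a), pow_mul]
  simp

theorem cupOneSign_succ_zero (a b : ℕ) : cupOneSign (a + 1) b 0 = -(-1) ^ (a * b) := by
  rw [cupOneSign, show (a + 1 + 0 + 1) * (b + 1) + (a + 1) = a * b + 2 * (a + b + 1) + 1 by ring,
    pow_succ, pow_add, pow_mul]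
  simp

theorem cupOneSign_succ_self (a b : ℕ) : cupOneSign (a + 1) b a = (-1) ^ (a + 1) := by
  rw [cupOneSign, show (a + 1 + a + 1) * (b + 1) + (a + 1) = 2 * ((a + 1) * (b + 1)) + (a + 1) by
    ring, pow_add, pow_mul]
  simp

variable (p : A →+ B →+ C) {a b k m : ℕ} {F : (ℕ → X) → A} {F' : (ℕ → X) → B}

theorem coboundary_sum_smul {ι : Type*} (n : ℕ) (s : Finset ι) (z : ι → ℤ)
    (G : ι → (ℕ → X) → A) :
    coboundary n (∑ i ∈ s, z i • G i) = ∑ i ∈ s, z i • coboundary n (G i) := by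
  have face_sum (m : ℕ) : face m (∑ i ∈ s, z i • G i) = ∑ i ∈ s, z i • face m (G i) := by
    ext x
    simp [face]
  simp only [coboundary, face_sum, Finset.smul_sum]
  rw [Finset.sum_comm]
  exact Finset.sum_congr rfl fun i _ => Finset.sum_congr rfl fun m _ => smul_comm _ _ _

theorem cupOneTerm_sum_smul_left {ι : Type*} (s : Finset ι) (z : ι → ℤ)
    (G : ι → (ℕ → X) → A) :
    cupOneTerm p b k (∑ i ∈ s, z i • G i) F' = ∑ i ∈ s, z i • cupOneTerm p b k (G i) F' := by
  ext x
  simp [cupOneTerm]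

theorem cupOneTerm_sum_smul_right {ι : Type*} (s : Finset ι) (z : ι → ℤ)
    (G : ι → (ℕ → X) → B) :
    cupOneTerm p b k F (∑ i ∈ s, z i • G i) = ∑ i ∈ s, z i • cupOneTerm p b k F (G i) := by
  ext x
  simp [cupOneTerm]

theorem face_cupOneTerm_of_le (h : m ≤ k) :
    face m (cupOneTerm p b k F F') = cupOneTerm p b (k + 1) (face m F) F' := by
  ext x
  simp only [face, cupOneTerm, Function.comp_assoc, coface_comp_leap_of_le h,
    coface_comp_add_of_le h]

theorem face_cupOneTerm_of_pos_of_le (h₀ : 0 < m) (h : m ≤ b) :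
    face (m + k) (cupOneTerm p b k F F') = cupOneTerm p (b + 1) k F (face m F') := by
  ext x
  simp only [face, cupOneTerm, Function.comp_assoc, coface_comp_leap_of_pos_of_le h₀ h,
    coface_add_comp_add]

theorem face_cupOneTerm_of_lt (hF' : DependsOn F' (Set.Iic b)) (h : k < m) :
    face (m + b) (cupOneTerm p b k F F') = cupOneTerm p b k (face (m + 1) F) F' := by
  obtain ⟨r, rfl⟩ := Nat.exists_eq_add_of_lt h
  ext x
  simp only [face, cupOneTerm, Function.comp_assoc, coface_comp_leap_of_lt h]
  rw [show k + r + 1 + b = (b + 1 + r) + k by ring, coface_add_comp_add]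
  congr 1
  exact congrFun (face_eq_self_of_dependsOn (m := b + 1 + r) hF' (by omega)) (x ∘ (· + k))

theorem cupOneTerm_face_zero_right :
    cupOneTerm p (b + 1) k F (face 0 F') = cupOneTerm p b (k + 1) (face (k + 1) F) F' := by
  ext x
  simp only [face, cupOneTerm, Function.comp_assoc, leap_succ_comp_coface_succ]
  congr 3
  funext t
  simp only [Function.comp, coface]
  grind

theorem cupOneTerm_face_succ_left :
    cupOneTerm p b k (face (k + 1) F) F' = cupOneTerm p (b + 1) k F F' := by
  ext x
  simp only [face, cupOneTerm, Function.comp_assoc, leap_comp_coface_succ]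

theorem cupOneTerm_zero_face_zero : cupOneTerm p b 0 (face 0 F) F' = cup p.flip b F' F := by
  ext x
  simp only [cupOneTerm, face, Function.comp_assoc, leap_zero_comp_coface_zero]
  rfl

theorem cupOneTerm_succ_self (hF : DependsOn F (Set.Iic a)) :
    cupOneTerm p (b + 1) a F F' = cup p a F F' := by
  have apply_comp_leap (x : ℕ → X) : F (x ∘ leap (b + 1) a) = F x :=
    hF fun t ht => by simp [leap, Set.mem_Iic.mp ht]
  ext x
  rw [cupOneTerm, apply_comp_leap, cup]

theorem cupOneTerm_coboundary_right (hF' : DependsOn F' (Set.Iic b)) :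
    cupOneTerm p (b + 1) k F (coboundary (b + 1) F') =
      cupOneTerm p b (k + 1) (face (k + 1) F) F'
      + ∑ m ∈ Finset.range b, (-1 : ℤ) ^ (m + 1) • cupOneTerm p (b + 1) k F (face (m + 1) F')
      + (-1 : ℤ) ^ (b + 1) • cupOneTerm p b k (face (k + 1) F) F' := by
  rw [coboundary, cupOneTerm_sum_smul_right, Finset.sum_range_succ, Finset.sum_range_succ',
    pow_zero, one_smul, cupOneTerm_face_zero_right, face_eq_self_of_dependsOn hF' b.lt_succ_self,
    cupOneTerm_face_succ_left, add_comm (∑ m ∈ _, _)]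

theorem cupOneTerm_coboundary_left (h : k ≤ a + 1) :
    cupOneTerm p b k (coboundary (a + 1) F) F' =
      ∑ m ∈ Finset.range (k + 1), (-1 : ℤ) ^ m • cupOneTerm p b k (face m F) F'
      + ∑ m ∈ Finset.Ico (k + 1) (a + 2), (-1 : ℤ) ^ m • cupOneTerm p b k (face m F) F' := by
  rw [coboundary, cupOneTerm_sum_smul_left, Finset.sum_range_add_sum_Ico _ (by omega)]

/-
The faces of the simplex split into those before, inside and behind the block `k, …, k + b`.
The ones inside are the inner faces of `F'`; the two outer faces of `F'` complete the two sums
over faces of `F`.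
-/
theorem coboundary_cupOneTerm (hF' : DependsOn F' (Set.Iic b)) (h : k < a) :
    coboundary (a + b) (cupOneTerm p b k F F') =
      (-1 : ℤ) ^ k • cupOneTerm p (b + 1) k F (coboundary (b + 1) F')
      + ∑ m ∈ Finset.range (k + 2), (-1 : ℤ) ^ m • cupOneTerm p b (k + 1) (face m F) F'
      - (-1 : ℤ) ^ b •
        ∑ m ∈ Finset.Ico (k + 1) (a + 2), (-1 : ℤ) ^ m • cupOneTerm p b k (face m F) F' := by
  have before : ∑ m ∈ Finset.range (k + 1), (-1 : ℤ) ^ m • face m (cupOneTerm p b k F F') =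
      ∑ m ∈ Finset.range (k + 1), (-1 : ℤ) ^ m • cupOneTerm p b (k + 1) (face m F) F' :=
    Finset.sum_congr rfl fun m hm => by
      rw [face_cupOneTerm_of_le p (Nat.lt_succ_iff.mp (Finset.mem_range.mp hm))]
  have inside : ∑ m ∈ Finset.range b,
        (-1 : ℤ) ^ (k + 1 + m) • face (k + 1 + m) (cupOneTerm p b k F F') =
      (-1 : ℤ) ^ k • ∑ m ∈ Finset.range b,
        (-1 : ℤ) ^ (m + 1) • cupOneTerm p (b + 1) k F (face (m + 1) F') := by
    rw [Finset.smul_sum]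
    refine Finset.sum_congr rfl fun m hm => ?_
    rw [show k + 1 + m = m + 1 + k by ring,
      face_cupOneTerm_of_pos_of_le p m.succ_pos (Finset.mem_range.mp hm), smul_smul, ← pow_add,
      add_comm k]
  have behind : ∑ m ∈ Finset.range (a - k),
        (-1 : ℤ) ^ (k + 1 + b + m) • face (k + 1 + b + m) (cupOneTerm p b k F F') =
      -((-1 : ℤ) ^ b • ∑ m ∈ Finset.Ico (k + 2) (a + 2),
        (-1 : ℤ) ^ m • cupOneTerm p b k (face m F) F') := by
    rw [Finset.sum_Ico_eq_sum_range, show a + 2 - (k + 2) = a - k by omega, Finset.smul_sum,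
      ← Finset.sum_neg_distrib]
    refine Finset.sum_congr rfl fun m _ => ?_
    rw [show k + 1 + b + m = k + 1 + m + b by ring, face_cupOneTerm_of_lt p hF' (by omega),
      show k + 1 + m + 1 = k + 2 + m by ring, smul_smul, ← neg_smul]
    congr 1
    ring
  rw [coboundary, show a + b + 1 = k + 1 + b + (a - k) by omega, Finset.sum_range_add,
    Finset.sum_range_add, before, inside, behind, cupOneTerm_coboundary_right p hF',
    Finset.sum_range_succ _ (k + 1), Finset.sum_eq_sum_Ico_succ_bot (by omega : k + 1 < a + 2)]
  simp only [pow_succ]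
  module

theorem cup_sub_cup_flip (hF : DependsOn F (Set.Iic a)) (hF' : DependsOn F' (Set.Iic b)) :
    cup p a F F' - (-1 : ℤ) ^ (a * b) • cup p.flip b F' F =
      coboundary (a + b) (cupOne p a b F F') + cupOne p (a + 1) b (coboundary (a + 1) F) F'
        + (-1 : ℤ) ^ a • cupOne p a (b + 1) F (coboundary (b + 1) F') := by
  let lower (k : ℕ) : (ℕ → X) → C := cupOneSign (a + 1) b k •
    ∑ m ∈ Finset.range (k + 1), (-1 : ℤ) ^ m • cupOneTerm p b k (face m F) F'
  let upper (k : ℕ) : (ℕ → X) → C := cupOneSign (a + 1) b k •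
    ∑ m ∈ Finset.Ico (k + 1) (a + 2), (-1 : ℤ) ^ m • cupOneTerm p b k (face m F) F'
  have coboundary_cupOne : coboundary (a + b) (cupOne p a b F F') =
      -((-1 : ℤ) ^ a • cupOne p a (b + 1) F (coboundary (b + 1) F'))
        - ∑ k ∈ Finset.range a, lower (k + 1) - ∑ k ∈ Finset.range a, upper k := by
    simp only [cupOne, coboundary_sum_smul, Finset.smul_sum, ← Finset.sum_neg_distrib,
      ← Finset.sum_sub_distrib]
    refine Finset.sum_congr rfl fun k hk => ?_
    dsimp only [lower, upper]
    rw [cupOneSign_succ_succ, cupOneSign_succ_left,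
      coboundary_cupOneTerm p hF' (Finset.mem_range.mp hk), smul_sub, smul_add, smul_smul,
      cupOneSign_mul_neg_one_pow]
    module
  have cupOne_coboundary : cupOne p (a + 1) b (coboundary (a + 1) F) F' =
      ∑ k ∈ Finset.range (a + 1), lower k + ∑ k ∈ Finset.range (a + 1), upper k := by
    rw [cupOne, ← Finset.sum_add_distrib]
    refine Finset.sum_congr rfl fun k hk => ?_
    rw [cupOneTerm_coboundary_left p (Finset.mem_range.mp hk).le, smul_add]
  have lower_zero : lower 0 = -((-1 : ℤ) ^ (a * b) • cup p.flip b F' F) := by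
    simp [lower, cupOneSign_succ_zero, cupOneTerm_zero_face_zero]
  have upper_self : upper a = cup p a F F' := by
    simp [upper, cupOneSign_succ_self, cupOneTerm_face_succ_left, smul_smul, ← mul_pow,
      cupOneTerm_succ_self p hF]
  rw [coboundary_cupOne, cupOne_coboundary, Finset.sum_range_succ' lower,
    Finset.sum_range_succ upper, lower_zero, upper_self]
  abel

end SequenceCochains

section Homogenization

variable {G H Δ M : Type*} [Group G] [Group H] [Group Δ] [AddCommGroup M] [DistribMulAction Δ M]
  {n : ℕ}

/-- The homogeneous `n`-cochains of `G` with values in `M`, on which `G` acts through `f`: the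
equivariant functions depending only on the vertices `0, …, n`. -/
def homogeneousCochains (f : G →* Δ) (M : Type*) [AddCommGroup M] [DistribMulAction Δ M] (n : ℕ) :
    AddSubgroup ((ℕ → G) → M) where
  carrier := {F | (∀ g x, F (fun t => g * x t) = f g • F x) ∧ DependsOn F (Set.Iic n)}
  zero_mem' := ⟨fun _ _ => (smul_zero _).symm, fun _ _ _ => rfl⟩
  add_mem' hF hF' := ⟨fun g x => by simp only [Pi.add_apply, hF.1, hF'.1, smul_add],
    fun _ _ h => congrArg₂ (· + ·) (hF.2 h) (hF'.2 h)⟩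
  neg_mem' hF := ⟨fun g x => by simp only [Pi.neg_apply, hF.1, smul_neg],
    fun _ _ h => congrArg Neg.neg (hF.2 h)⟩

/-- The homogeneous cochain corresponding to the inhomogeneous cochain `c`. -/
def homogenize (f : G →* Δ) (c : (Fin n → G) → M) : (ℕ → G) → M :=
  fun x => f (x 0) • c (fun t => (x t)⁻¹ * x (t + 1))

/-- The vertices `1, y₁, y₁y₂, …` of the simplex with edges `y`; the sequence is constant from
index `n` on. It is `Fin.partialProd` with indices in `ℕ`. -/
def vertices (y : Fin n → G) (k : ℕ) : G := ((List.ofFn y).take k).prod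

/-- The restriction of a cochain along a homomorphism of groups. -/
def pullbackC (g : H →* G) (c : (Fin n → G) → M) : (Fin n → H) → M := fun y => c (fun t => g (y t))

theorem vertices_zero (y : Fin n → G) : vertices y 0 = 1 := by
  simp [vertices]

theorem vertices_succ (y : Fin n → G) {k : ℕ} (hk : k < n) :
    vertices y (k + 1) = vertices y k * y ⟨k, hk⟩ := by
  rw [vertices, List.prod_take_succ _ _ (by simpa using hk)]
  simp [vertices]

theorem inv_vertices_mul_vertices_succ (y : Fin n → G) {k : ℕ} (hk : k < n) :
    (vertices y k)⁻¹ * vertices y (k + 1) = y ⟨k, hk⟩ := by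
  rw [vertices_succ y hk, inv_mul_cancel_left]

theorem vertices_cast {m : ℕ} (h : m = n) (y : Fin n → G) :
    vertices (fun t => y (Fin.cast h t)) = vertices y := by
  subst h
  rfl

theorem vertices_map (g : H →* G) (y : Fin n → H) :
    vertices (fun t => g (y t)) = g ∘ vertices y := by
  ext k
  simp only [vertices, Function.comp_apply, map_list_prod, List.map_take, List.map_ofFn]
  rfl

theorem vertices_castAdd {i j k : ℕ} (y : Fin (i + j) → G) (hk : k ≤ i) :
    vertices (fun t : Fin i => y (Fin.castAdd j t)) k = vertices y k := by
  induction k with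
  | zero => rw [vertices_zero, vertices_zero]
  | succ k ih =>
    rw [vertices_succ _ (by omega), vertices_succ _ (by omega), ih (by omega)]
    rfl

theorem vertices_edges (x : ℕ → G) {k : ℕ} (hk : k ≤ n) :
    vertices (fun t : Fin n => (x t)⁻¹ * x (t + 1)) k = (x 0)⁻¹ * x k := by
  induction k with
  | zero => rw [vertices_zero, inv_mul_cancel]
  | succ k ih => rw [vertices_succ _ (by omega), ih (by omega), mul_assoc, mul_inv_cancel_left]

variable (f : G →* Δ) (c : (Fin n → G) → M)

theorem homogenize_vertices (y : Fin n → G) : homogenize f c (vertices y) = c y := by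
  simp [homogenize, vertices_zero, inv_vertices_mul_vertices_succ]

theorem homogenize_mem : homogenize f c ∈ homogeneousCochains f M n := by
  refine ⟨fun g x => ?_, fun x y h => ?_⟩
  · simp only [homogenize, map_mul, mul_smul, mul_inv_rev, mul_assoc, inv_mul_cancel_left]
  · have h' (t : ℕ) (ht : t ≤ n) : x t = y t := h t ht
    simp only [homogenize, h' 0 n.zero_le, h' _ Fin.is_le', h' _ (Nat.succ_le_of_lt (Fin.is_lt _))]

theorem homogenize_comp_vertices {f : G →* Δ} {F : (ℕ → G) → M}
    (hF : F ∈ homogeneousCochains f M n) :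
    homogenize f (fun y : Fin n → G => F (vertices y)) = F := by
  ext x
  rw [homogenize, hF.2 fun k hk => vertices_edges x hk, hF.1, smul_smul, ← map_mul, mul_inv_cancel,
    map_one, one_smul]

theorem homogenize_pullbackC (g : H →* G) (x : ℕ → H) :
    homogenize (f.comp g) (pullbackC g c) x = homogenize f c (g ∘ x) := by
  simp [homogenize, pullbackC]

theorem homogenize_zero : homogenize f (0 : (Fin n → G) → M) = 0 := by
  ext x
  simp [homogenize]

theorem homogenize_neg : homogenize f (-c) = -homogenize f c := by
  ext x
  simp [homogenize]

theorem face_mem {f : G →* Δ} {F : (ℕ → G) → M} (hF : F ∈ homogeneousCochains f M n) (m : ℕ) :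
    face m F ∈ homogeneousCochains f M (n + 1) := by
  refine ⟨fun g x => hF.1 g _, fun x y h => hF.2 fun t ht => h _ ?_⟩
  have : t ≤ n := ht
  simp only [coface, Set.mem_Iic]
  grind

theorem coboundary_mem {f : G →* Δ} {F : (ℕ → G) → M} (hF : F ∈ homogeneousCochains f M n)
    (m : ℕ) : coboundary m F ∈ homogeneousCochains f M (n + 1) :=
  sum_mem fun k _ => zsmul_mem (face_mem hF k) _

theorem face_zero_homogenize_vertices (y : Fin (n + 1) → G) :
    face 0 (homogenize f c) (vertices y) = f (y 0) • c (Fin.tail y) := by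
  simp only [face, homogenize, coface, Function.comp_apply, Nat.not_lt_zero, if_false]
  rw [vertices_succ y n.succ_pos, vertices_zero, one_mul]
  congr 2
  funext t
  exact inv_vertices_mul_vertices_succ y (by omega)

theorem face_succ_homogenize_vertices (y : Fin (n + 1) → G) (k : Fin n) :
    face (k + 1) (homogenize f c) (vertices y) = c (contractG y k) := by
  simp only [face, homogenize, coface, Function.comp_apply, Nat.succ_pos, if_true, vertices_zero,
    map_one, one_smul]
  congr 1
  funext t
  rw [contractG]
  rcases lt_trichotomy (t : ℕ) k with h | h | h
  · rw [if_pos h, if_pos (by omega), if_pos (by omega)]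
    exact inv_vertices_mul_vertices_succ y (by omega)
  · rw [if_neg h.not_lt, if_pos h, if_pos (by omega : (t : ℕ) < k + 1),
      if_neg (by omega : ¬(t : ℕ) + 1 < k + 1),
      vertices_succ y (by omega : (t : ℕ) + 1 < n + 1),
      vertices_succ y (by omega : (t : ℕ) < n + 1), mul_assoc, inv_mul_cancel_left]
    rfl
  · rw [if_neg (by omega), if_neg (by omega), if_neg (by omega), if_neg (by omega)]
    exact inv_vertices_mul_vertices_succ y (by omega)

theorem face_last_homogenize_vertices (y : Fin (n + 1) → G) :
    face (n + 1) (homogenize f c) (vertices y) = c (Fin.init y) := by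
  simp only [face, homogenize, coface, Function.comp_apply, Nat.succ_pos, if_true, vertices_zero,
    map_one, one_smul]
  congr 1
  funext t
  rw [if_pos (by omega), if_pos (by omega)]
  exact inv_vertices_mul_vertices_succ y (by omega)

theorem coboundary_homogenize_vertices (y : Fin (n + 1) → G) :
    coboundary (n + 1) (homogenize f c) (vertices y) = dRel f c y := by
  simp only [coboundary, Finset.sum_apply, Pi.smul_apply]
  rw [Finset.sum_range_succ, Finset.sum_range_succ', Finset.sum_range, pow_zero, one_smul,
    face_zero_homogenize_vertices, face_last_homogenize_vertices, add_comm (∑ k, _), dRel]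
  simp only [face_succ_homogenize_vertices]

theorem coboundary_homogenize :
    coboundary (n + 1) (homogenize f c) = homogenize f (dRel f c) := by
  rw [← homogenize_comp_vertices (coboundary_mem (homogenize_mem f c) (n + 1))]
  simp only [coboundary_homogenize_vertices]

theorem dRel_pullbackC (g : H →* G) : dRel (f.comp g) (pullbackC g c) = pullbackC g (dRel f c) := by
  ext y
  rw [← homogenize_vertices (f.comp g) (dRel _ _), ← coboundary_homogenize, pullbackC,
    ← homogenize_vertices f (dRel f c), ← coboundary_homogenize, vertices_map]
  simp only [coboundary, face, Finset.sum_apply, Pi.smul_apply, homogenize_pullbackC]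
  rfl

theorem dRel_neg : dRel f (-c) = -dRel f c := by
  ext y
  simp only [dRel, Pi.neg_apply, smul_neg, Finset.sum_neg_distrib, neg_add]

end Homogenization

section CupProducts

variable {G H Δ A B C : Type*} [Group G] [Group H] [Group Δ] [AddCommGroup A] [AddCommGroup B]
  [AddCommGroup C] [DistribMulAction Δ A] [DistribMulAction Δ B]
  (f : G →* Δ) (p : A →+ B →+ C) {i j n : ℕ} (c : (Fin i → G) → A) (c' : (Fin j → G) → B)

/-- The `∪₁`-product of inhomogeneous cochains. The meaningful degree is `n = i + j - 1`; leaving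
it free avoids transports along equalities of degrees. -/
def cupOneP : (Fin n → G) → C :=
  fun y => cupOne p i j (homogenize f c) (homogenize f c') (vertices y)

theorem cup_homogenize_vertices (y : Fin (i + j) → G) :
    cup p i (homogenize f c) (homogenize f c') (vertices y) = cupP f p c c' y := by
  have front : homogenize f c (vertices y) = c (fun t => y (Fin.castAdd j t)) := by
    rw [← homogenize_vertices f c]
    exact (homogenize_mem f c).2 fun k hk => (vertices_castAdd y hk).symm
  have back : homogenize f c' (vertices y ∘ (· + i)) =
      f (List.ofFn fun t : Fin i => y (Fin.castAdd j t)).prod •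
        c' (fun t => y (Fin.natAdd i t)) := by
    have prod_eq : (List.ofFn fun t : Fin i => y (Fin.castAdd j t)).prod = vertices y i := by
      rw [← vertices_castAdd y le_rfl, vertices, List.take_of_length_le (by simp)]
    rw [prod_eq, homogenize, Function.comp_apply, zero_add]
    congr 2
    funext t
    rw [Function.comp_apply, Function.comp_apply, add_right_comm,
      inv_vertices_mul_vertices_succ y (by omega)]
    congr 1
    exact Fin.ext (add_comm _ _)
  rw [cup, front, back, cupP]

theorem cupP_sub_cupP_flip (y : Fin (i + j) → G) :
    cupP f p c c' y - (-1 : ℤ) ^ (i * j) • castC (add_comm j i) (cupP f p.flip c' c) y =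
      coboundary (i + j) (cupOne p i j (homogenize f c) (homogenize f c')) (vertices y)
        + cupOneP f p (dRel f c) c' y + (-1 : ℤ) ^ i • cupOneP f p c (dRel f c') y := by
  have h := congrFun (cup_sub_cup_flip p (homogenize_mem f c).2 (homogenize_mem f c').2)
    (vertices y)
  rw [coboundary_homogenize, coboundary_homogenize] at h
  rw [castC, ← cup_homogenize_vertices, ← cup_homogenize_vertices, vertices_cast]
  exact h

theorem cupOne_mem [DistribMulAction Δ C] {f : G →* Δ}
    (hp : ∀ (g : Δ) (a : A) (b : B), p (g • a) (g • b) = g • p a b) {F : (ℕ → G) → A}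
    {F' : (ℕ → G) → B} (hF : F ∈ homogeneousCochains f A i) (hF' : F' ∈ homogeneousCochains f B j)
    (h : i + j = n + 1) : cupOne p i j F F' ∈ homogeneousCochains f C n := by
  refine sum_mem fun k hk => zsmul_mem (x := cupOneTerm p j k F F') ?_ _
  refine ⟨fun g x => ?_, fun x y hxy => ?_⟩
  · rw [cupOneTerm, cupOneTerm, ← hp, ← hF.1, ← hF'.1]
    rfl
  · have hk : k < i := Finset.mem_range.mp hk
    have hxy (t : ℕ) (ht : t ≤ n) : x t = y t := hxy t ht
    exact congrArg₂ (fun u v => p u v)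
      (hF.2 fun t (ht : t ≤ i) => hxy (leap j k t) (by simp only [leap]; grind))
      (hF'.2 fun t (ht : t ≤ j) => hxy (t + k) (by omega))

theorem coboundary_cupOne_vertices [DistribMulAction Δ C]
    (hp : ∀ (g : Δ) (a : A) (b : B), p (g • a) (g • b) = g • p a b) (h : i + j = n + 1)
    (y : Fin (i + j) → G) :
    coboundary (i + j) (cupOne p i j (homogenize f c) (homogenize f c')) (vertices y) =
      castC h.symm (dRel f (cupOneP f p c c' : (Fin n → G) → C)) y := by
  have homogenize_cupOneP : homogenize f (cupOneP f p c c' : (Fin n → G) → C) =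
      cupOne p i j (homogenize f c) (homogenize f c') :=
    homogenize_comp_vertices (cupOne_mem p hp (homogenize_mem f c) (homogenize_mem f c') h)
  rw [castC, ← coboundary_homogenize_vertices, vertices_cast, homogenize_cupOneP, ← h]

theorem cupOneP_pullbackC (g : H →* G) :
    (cupOneP (f.comp g) p (pullbackC g c) (pullbackC g c') : (Fin n → H) → C) =
      pullbackC g (cupOneP f p c c') := by
  ext y
  rw [pullbackC, cupOneP, cupOneP, vertices_map]
  simp only [cupOne, cupOneTerm, Finset.sum_apply, Pi.smul_apply, homogenize_pullbackC]
  rfl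

theorem cupOneP_zero_left : (cupOneP f p (0 : (Fin i → G) → A) c' : (Fin n → G) → C) = 0 := by
  ext y
  simp [cupOneP, cupOne, cupOneTerm, homogenize_zero]

theorem cupOneP_zero_right : (cupOneP f p c (0 : (Fin j → G) → B) : (Fin n → G) → C) = 0 := by
  ext y
  simp [cupOneP, cupOne, cupOneTerm, homogenize_zero]

theorem cupOneP_neg_left : (cupOneP f p (-c) c' : (Fin n → G) → C) = -cupOneP f p c c' := by
  ext y
  simp [cupOneP, cupOne, cupOneTerm, homogenize_neg]

theorem cupP_sub_cupP_flip_of_relative {α : (Fin (i + 1) → Δ) → A} {β : (Fin i → G) → A}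
    {γ : (Fin j → Δ) → B} (hβ : dRel f β = -pullbackC f α) (hγ : dRel (MonoidHom.id Δ) γ = 0)
    (y : Fin (i + j) → G) :
    cupP f p β (pullbackC f γ) y
        - (-1 : ℤ) ^ ((i + 1) * j) • (-1 : ℤ) ^ j •
          castC (add_comm j i) (cupP f p.flip (pullbackC f γ) β) y =
      - pullbackC f (cupOneP (MonoidHom.id Δ) p α γ) y
        + coboundary (i + j) (cupOne p i j (homogenize f β) (homogenize f (pullbackC f γ)))
            (vertices y) := by
  have sign : (-1 : ℤ) ^ ((i + 1) * j) * (-1) ^ j = (-1) ^ (i * j) := by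
    rw [← pow_add, show (i + 1) * j + j = i * j + 2 * j by ring, pow_add, pow_mul _ 2]
    simp
  have dRel_restrict : dRel f (pullbackC f γ) = 0 :=
    (dRel_pullbackC (MonoidHom.id Δ) γ f).trans (congrArg (pullbackC f) hγ)
  have cupOneP_restrict : (cupOneP f p (pullbackC f α) (pullbackC f γ) : (Fin (i + j) → G) → C) =
      pullbackC f (cupOneP (MonoidHom.id Δ) p α γ) :=
    cupOneP_pullbackC (MonoidHom.id Δ) p α γ f
  rw [smul_smul, sign, cupP_sub_cupP_flip, hβ, dRel_restrict, cupOneP_neg_left, cupOneP_restrict,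
    cupOneP_zero_right, Pi.neg_apply, Pi.zero_apply, smul_zero, add_zero, add_comm]

end CupProducts

/-- Graded commutativity of the cup products on relative (mapping cone) cohomology:
for a relative class `(α,β) ∈ H^{i+1}(Δ,π;A)` and `γ ∈ H^j(Δ,B)`, the classes
`(α,β) ∪ γ = (α ∪ γ, β ∪ γ|_π)` and `γ ∪ (α,β) = (γ ∪ α, (-1)^j γ|_π ∪ β)` satisfy
`(α,β) ∪ γ = (-1)^{(i+1)j}·γ ∪ (α,β)`, i.e. their difference is a relative coboundary
`d(u,w) = (du, -u|_π - dw)`. -/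
theorem stmt16 {Δ ι : Type*} [Group Δ] {P : ι → Type*} [∀ v, Group (P v)]
    (f : ∀ v, P v →* Δ)
    {A B C : Type*} [AddCommGroup A] [AddCommGroup B] [AddCommGroup C]
    [DistribMulAction Δ A] [DistribMulAction Δ B] [DistribMulAction Δ C]
    (p : A →+ B →+ C)
    (hp : ∀ (g : Δ) (a : A) (b : B), p (g • a) (g • b) = g • p a b)
    {i j : ℕ}
    (α : (Fin (i + 1) → Δ) → A) (β : ∀ v, (Fin i → P v) → A)
    (γ : (Fin j → Δ) → B)
    (hrel₁ : dRel (MonoidHom.id Δ) α = 0)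
    (hrel₂ : ∀ v (y : Fin (i + 1) → P v),
      - α (fun t => f v (y t)) - dRel (f v) (β v) y = 0)
    (hγ : dRel (MonoidHom.id Δ) γ = 0) :
    ∃ u : (Fin (i + j) → Δ) → C,
      (∀ y : Fin (i + 1 + j) → Δ,
        cupP (MonoidHom.id Δ) p α γ y
            - ((-1 : ℤ) ^ ((i + 1) * j)) •
              castC (by omega) (cupP (MonoidHom.id Δ) p.flip γ α) y
          = castC (by omega) (dRel (MonoidHom.id Δ) u) y) ∧
      (i + j = 0 → ∀ v (y : Fin (i + j) → P v),
        cupP (f v) p (β v) (fun z => γ (fun t => f v (z t))) y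
            - ((-1 : ℤ) ^ ((i + 1) * j)) • ((-1 : ℤ) ^ j) •
              castC (by omega)
                (cupP (f v) p.flip (fun z => γ (fun t => f v (z t))) (β v)) y
          = - u (fun t => f v (y t))) ∧
      (∀ m : ℕ, ∀ _hm : i + j = m + 1,
        ∃ w : ∀ v, (Fin m → P v) → C,
          ∀ v (y : Fin (i + j) → P v),
            cupP (f v) p (β v) (fun z => γ (fun t => f v (z t))) y
                - ((-1 : ℤ) ^ ((i + 1) * j)) • ((-1 : ℤ) ^ j) •
                  castC (by omega)
                    (cupP (f v) p.flip (fun z => γ (fun t => f v (z t))) (β v)) y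
              = - u (fun t => f v (y t)) - castC (by omega) (dRel (f v) (w v)) y) := by
  have hβ (v : ι) : dRel (f v) (β v) = -pullbackC (f v) α :=
    funext fun y => (sub_eq_zero.mp (hrel₂ v y)).symm
  have second_component (v : ι) := cupP_sub_cupP_flip_of_relative (f v) p (hβ v) hγ
  refine ⟨cupOneP (MonoidHom.id Δ) p α γ, fun y => ?_, fun h v y => ?_, fun m h => ?_⟩
  · rw [cupP_sub_cupP_flip, hrel₁, hγ, cupOneP_zero_left, cupOneP_zero_right,
      coboundary_cupOne_vertices (MonoidHom.id Δ) p α γ hp (by omega : i + 1 + j = i + j + 1)]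
    simp
  · obtain rfl : i = 0 := by omega
    refine (second_component v y).trans ?_
    simp [cupOne, coboundary, face, pullbackC]
  · refine ⟨fun v => -cupOneP (f v) p (β v) (pullbackC (f v) γ), fun v y => ?_⟩
    refine (second_component v y).trans ?_
    rw [coboundary_cupOne_vertices (f v) p (β v) (pullbackC (f v) γ) hp h, dRel_neg]
    simp [castC, pullbackC]
end
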